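/- arXiv:2210.03447 — 3 statements merged into one kernel-verified Lean document; each statement's English description precedes it below -/
import Mathlib

section
/- The function w satisfies the linear degenerate elliptic equation p²·w_{qq}(p,q) − 2pq·w_{pq}(p,q) + q²·w_{pp}(p,q) = 0 at every point (p,q) of the open sector B₁. -/
/-!
In polar coordinates the operator `p² ∂_qq − 2pq ∂_pq + q² ∂_pp` equals `∂_θθ + r ∂_r`: the
rotation field `p ∂_q − q ∂_p` is `∂_θ`, and squaring it produces the operator minus the first-order
term `p ∂_p + q ∂_q = r ∂_r`. It annihilates each mode `r^{m²} sin (m θ)`, on which `∂_θθ` acts as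
`−m²` and `r ∂_r` as `m²`. The analytic content is that the series may be differentiated twice
term by term for `r < 1`.

With `a = log r` the modes are the imaginary parts of `exp (m² a + i m φ)`. The series
`Phi j a φ = ∑ cₙ mₙ^j exp (mₙ² a + i mₙ φ)`, indexed by the power `j` of the frequency, form a family
closed under differentiation: `∂_a Phi j = Phi (j+2)` and `∂_φ Phi j = i Phi (j+1)`
(`hasFDerivAt_Phi`), since the factors `exp (mₙ² a)` dominate every power of `mₙ`, uniformly on
half-planes `a ≤ b < 0`. Composition with `a = log (p² + q²) / 2` and `φ = arctan (q / p)` gives the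
functions `T j`, with `w = (8/π) Im (T 0)` on the sector (`w_eq`) and explicit partial derivatives
(`hasDerivAt_T_fst`, `hasDerivAt_T_snd`). All second partials of `w` are then rational expressions
in `p`, `q`, `T 1`, …, `T 4`, and the equation is an algebraic identity between them.
-/

open Real Set Topology Filter

/-- `mIdx n = 4(n+1) - 2 = 4n + 2`, the odd-indexed frequencies `2, 6, 10, …`. -/
def mIdx (n : ℕ) : ℕ := 4 * n + 2

/-- `W(r,θ) = (8/π) ∑_{n≥1} r^{mₙ²} sin(mₙ θ) / ((mₙ² − 1) mₙ)` with `mₙ = 4n − 2`. -/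
noncomputable def W (r θ : ℝ) : ℝ :=
  (8 / π) * ∑' n : ℕ,
    r ^ (mIdx n ^ 2) * Real.sin ((mIdx n : ℝ) * θ) / (((mIdx n : ℝ) ^ 2 - 1) * (mIdx n : ℝ))

/-- `w` in Cartesian coordinates: `w(r cos θ, r sin θ) = W(r,θ)`.  On the open sector `B₁`
(where `p, q > 0`) this is `W(√(p²+q²), arctan(q/p))`. -/
noncomputable def w (p q : ℝ) : ℝ := W (Real.sqrt (p ^ 2 + q ^ 2)) (Real.arctan (q / p))

/-- First partial `w_p`. -/
noncomputable def wp (p q : ℝ) : ℝ := deriv (fun s => w s q) p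
/-- First partial `w_q`. -/
noncomputable def wq (p q : ℝ) : ℝ := deriv (fun t => w p t) q
/-- Second partial `w_{pp}`. -/
noncomputable def wpp (p q : ℝ) : ℝ := deriv (fun s => wp s q) p
/-- Second partial `w_{qq}`. -/
noncomputable def wqq (p q : ℝ) : ℝ := deriv (fun t => wq p t) q
/-- Mixed second partial `w_{pq}`. -/
noncomputable def wpq (p q : ℝ) : ℝ := deriv (fun t => wp p t) q

/-- The open sector `B₁` in the first quadrant. -/
def B1 : Set (ℝ × ℝ) := {p : ℝ × ℝ | 0 < p.1 ∧ 0 < p.2 ∧ p.1 ^ 2 + p.2 ^ 2 < 1}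

/-- The open unit square `Ω₁ = (0,1)²`. -/
def Ω1 : Set (ℝ × ℝ) := (Ioo (0 : ℝ) 1) ×ˢ Ioo (0 : ℝ) 1

/-- The (transposed) gradient map `∇wᵀ : (p,q) ↦ (w_p, w_q)`. -/
noncomputable def gradw (p : ℝ × ℝ) : ℝ × ℝ := (wp p.1 p.2, wq p.1 p.2)


/-! ### The series in logarithmic polar coordinates -/

/-- The coefficient `1 / ((m² − 1) m)` of the mode with frequency `m = mIdx n`. -/
noncomputable def coef (n : ℕ) : ℝ := 1 / (((mIdx n : ℝ) ^ 2 - 1) * (mIdx n : ℝ))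

/-- The complex mode `c m^j exp (m² a + i m φ)` with `m = mIdx n` and `c = coef n`. For `j = 0` and
`a = log r` its imaginary part is `c r^{m²} sin (m φ)`. -/
noncomputable def modeTerm (j n : ℕ) (a φ : ℝ) : ℂ :=
  ((coef n * (mIdx n : ℝ) ^ j : ℝ) : ℂ) *
    Complex.exp ((mIdx n : ℂ) ^ 2 * (a : ℂ) + Complex.I * (mIdx n : ℂ) * (φ : ℂ))

/-- The sum of the modes `modeTerm j n`; it converges for `a < 0`. -/
noncomputable def Phi (j : ℕ) (a φ : ℝ) : ℂ := ∑' n : ℕ, modeTerm j n a φ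

lemma two_le_mIdx (n : ℕ) : (2 : ℝ) ≤ mIdx n := by
  unfold mIdx; push_cast; linarith [(Nat.cast_nonneg n : (0:ℝ) ≤ n)]

lemma coef_nonneg (n : ℕ) : 0 ≤ coef n := by
  have := two_le_mIdx n
  unfold coef
  have : 0 < (mIdx n : ℝ) ^ 2 - 1 := by nlinarith
  positivity

lemma coef_le_one (n : ℕ) : coef n ≤ 1 := by
  have := two_le_mIdx n
  unfold coef
  rw [div_le_one (by have : 0 < (mIdx n : ℝ) ^ 2 - 1 := by nlinarith
                     positivity)]
  nlinarith

/-- A bound uniform on `a ≤ b < 0`. The Gaussian-type decay `exp (m² b)` is weakened to `exp (m b)`,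
which is enough for summability against any power of `m`. -/
lemma norm_modeTerm_le (j n : ℕ) {a b : ℝ} (hab : a ≤ b) (hb : b < 0) (φ : ℝ) :
    ‖modeTerm j n a φ‖ ≤ (mIdx n : ℝ) ^ j * Real.exp (-(-b) * (mIdx n : ℝ)) := by
  have hm := two_le_mIdx n
  have hc := coef_nonneg n
  have hc1 := coef_le_one n
  unfold modeTerm
  rw [norm_mul, Complex.norm_real, Complex.norm_exp, Real.norm_of_nonneg (by positivity)]
  have hre : ((mIdx n : ℂ) ^ 2 * (a : ℂ) + Complex.I * (mIdx n : ℂ) * (φ : ℂ)).re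
      = (mIdx n : ℝ) ^ 2 * a := by
    have : ((mIdx n : ℂ) ^ 2 * (a : ℂ) + Complex.I * (mIdx n : ℂ) * (φ : ℂ))
      = (((mIdx n : ℝ) ^ 2 * a : ℝ) : ℂ) + (((mIdx n : ℝ) * φ : ℝ) : ℂ) * Complex.I := by
      push_cast; ring
    rw [this, Complex.add_re, Complex.ofReal_re, Complex.re_ofReal_mul, Complex.I_re]; ring
  rw [hre]
  have h1 : coef n * (mIdx n : ℝ) ^ j ≤ (mIdx n : ℝ) ^ j :=
    mul_le_of_le_one_left (by positivity) hc1
  refine mul_le_mul h1 (Real.exp_le_exp.2 ?_) (Real.exp_pos _).le (by positivity)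
  nlinarith [mul_nonneg (sq_nonneg (mIdx n : ℝ)) (sub_nonneg.2 hab),
    mul_nonneg (mul_nonneg (by linarith : (0:ℝ) ≤ mIdx n) (by linarith : (0:ℝ) ≤ mIdx n - 1))
      (by linarith : 0 ≤ -b)]

lemma summable_majorant (j : ℕ) {b : ℝ} (hb : b < 0) :
    Summable fun n : ℕ => (mIdx n : ℝ) ^ j * Real.exp (-(-b) * (mIdx n : ℝ)) := by
  have hinj : Function.Injective mIdx := fun x y h => by unfold mIdx at h; omega
  exact (Real.summable_pow_mul_exp_neg_nat_mul j (by linarith : 0 < -b)).comp_injective hinj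

lemma summable_modeTerm (j : ℕ) {a : ℝ} (ha : a < 0) (φ : ℝ) :
    Summable fun n => modeTerm j n a φ :=
  Summable.of_norm_bounded (summable_majorant j ha) fun n => norm_modeTerm_le j n le_rfl ha φ

/-- The Fréchet derivative of the mode in `(a, φ)`: `∂_a` brings down `m²` and `∂_φ` brings down
`i m`, which raises the index `j` by `2` and by `1` respectively. -/
noncomputable def modeTermD (j n : ℕ) (x : ℝ × ℝ) : ℝ × ℝ →L[ℝ] ℂ :=
  (ContinuousLinearMap.fst ℝ ℝ ℝ).smulRight (modeTerm (j + 2) n x.1 x.2) +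
    (ContinuousLinearMap.snd ℝ ℝ ℝ).smulRight (Complex.I * modeTerm (j + 1) n x.1 x.2)

lemma hasFDerivAt_modeTerm (j n : ℕ) (x : ℝ × ℝ) :
    HasFDerivAt (fun y : ℝ × ℝ => modeTerm j n y.1 y.2) (modeTermD j n x) x := by
  have h1 : HasFDerivAt (fun y : ℝ × ℝ => (y.1 : ℂ))
      (Complex.ofRealCLM.comp (ContinuousLinearMap.fst ℝ ℝ ℝ)) x :=
    (Complex.ofRealCLM.comp (ContinuousLinearMap.fst ℝ ℝ ℝ)).hasFDerivAt
  have h2 : HasFDerivAt (fun y : ℝ × ℝ => (y.2 : ℂ))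
      (Complex.ofRealCLM.comp (ContinuousLinearMap.snd ℝ ℝ ℝ)) x :=
    (Complex.ofRealCLM.comp (ContinuousLinearMap.snd ℝ ℝ ℝ)).hasFDerivAt
  have h := (((h1.const_mul ((mIdx n : ℂ) ^ 2)).add
    (h2.const_mul (Complex.I * (mIdx n : ℂ)))).cexp).const_mul
      ((coef n * (mIdx n : ℝ) ^ j : ℝ) : ℂ)
  refine h.congr_fderiv ?_
  ext <;> simp [modeTermD, modeTerm] <;> ring

lemma norm_modeTermD_le (j n : ℕ) {b : ℝ} (hb : b < 0) (x : ℝ × ℝ) (hx : x.1 ≤ b) :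
    ‖modeTermD j n x‖ ≤ (mIdx n : ℝ) ^ (j + 2) * Real.exp (-(-b) * (mIdx n : ℝ)) +
      (mIdx n : ℝ) ^ (j + 1) * Real.exp (-(-b) * (mIdx n : ℝ)) := by
  refine (norm_add_le _ _).trans (add_le_add ?_ ?_)
  · rw [ContinuousLinearMap.norm_smulRight_apply]
    exact (mul_le_of_le_one_left (norm_nonneg _) (ContinuousLinearMap.norm_fst_le ..)).trans
      (norm_modeTerm_le _ n hx hb _)
  · rw [ContinuousLinearMap.norm_smulRight_apply, norm_mul, Complex.norm_I, one_mul]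
    exact (mul_le_of_le_one_left (norm_nonneg _) (ContinuousLinearMap.norm_snd_le ..)).trans
      (norm_modeTerm_le _ n hx hb _)

/-- Termwise differentiation: `∂_a Phi j = Phi (j+2)` and `∂_φ Phi j = i Phi (j+1)` for `a < 0`. -/
lemma hasFDerivAt_Phi (j : ℕ) (x : ℝ × ℝ) (hx : x.1 < 0) :
    HasFDerivAt (fun y : ℝ × ℝ => Phi j y.1 y.2)
      ((ContinuousLinearMap.fst ℝ ℝ ℝ).smulRight (Phi (j + 2) x.1 x.2) +
        (ContinuousLinearMap.snd ℝ ℝ ℝ).smulRight (Complex.I * Phi (j + 1) x.1 x.2)) x := by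
  -- The derivatives are dominated on the half-plane `a < x.1 / 2`, a convex neighbourhood of `x`.
  have hb : x.1 / 2 < 0 := by linarith
  have hu := (summable_majorant (j + 2) hb).add (summable_majorant (j + 1) hb)
  have hopen : IsOpen {y : ℝ × ℝ | y.1 < x.1 / 2} := isOpen_lt continuous_fst continuous_const
  have hconv : Convex ℝ {y : ℝ × ℝ | y.1 < x.1 / 2} :=
    convex_halfSpace_lt (IsLinearMap.mk (fun _ _ => rfl) fun _ _ => rfl) _
  have hxm : x ∈ {y : ℝ × ℝ | y.1 < x.1 / 2} := by
    change x.1 < x.1 / 2; linarith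
  have h := hasFDerivAt_tsum_of_isPreconnected hu hopen hconv.isPreconnected
    (fun n y _ => hasFDerivAt_modeTerm j n y)
    (fun n y hy => norm_modeTermD_le j n hb y (le_of_lt hy)) hxm (summable_modeTerm j hx x.2) hxm
  refine h.congr_fderiv ?_
  have hs : Summable fun n => modeTermD j n x :=
    Summable.of_norm_bounded hu fun n => norm_modeTermD_le j n hb x (le_of_lt hxm)
  have happ : ∀ v : ℝ × ℝ, (∑' n, modeTermD j n x) v = ∑' n, modeTermD j n x v := fun v =>
    (ContinuousLinearMap.apply ℝ ℂ v).map_tsum hs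
  ext
  all_goals
    simp only [ContinuousLinearMap.comp_apply]
    rw [happ]
    simp [modeTermD, Phi, tsum_mul_left]

lemma hasDerivAt_Phi_comp (j : ℕ) {a φ : ℝ → ℝ} {a' φ' t : ℝ} (ha : HasDerivAt a a' t)
    (hφ : HasDerivAt φ φ' t) (hneg : a t < 0) :
    HasDerivAt (fun s => Phi j (a s) (φ s))
      (a' * Phi (j + 2) (a t) (φ t) + φ' * (Complex.I * Phi (j + 1) (a t) (φ t))) t := by
  have h := (hasFDerivAt_Phi j (a t, φ t) hneg).comp_hasDerivAt t (ha.prodMk hφ)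
  simpa [Function.comp_def] using h

/-! ### Partial derivatives in Cartesian coordinates -/

/-- `Phi j` in Cartesian coordinates, with `a = log √(p² + q²)` and polar angle `φ = arctan (q / p)`
(the right branch for `p > 0`). -/
noncomputable def T (j : ℕ) (p q : ℝ) : ℂ :=
  Phi j (Real.log (p ^ 2 + q ^ 2) / 2) (Real.arctan (q / p))

lemma log_neg_of_mem {p q : ℝ} (h : (p, q) ∈ B1) : Real.log (p ^ 2 + q ^ 2) / 2 < 0 := by
  obtain ⟨h1, h2, h3⟩ := h
  have : Real.log (p ^ 2 + q ^ 2) < 0 := Real.log_neg (by positivity) h3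
  linarith

lemma w_eq {p q : ℝ} (h : (p, q) ∈ B1) : w p q = (8 / π) * (T 0 p q).im := by
  obtain ⟨h1, h2, h3⟩ := h
  simp only at h1 h2 h3
  have hs : 0 < p ^ 2 + q ^ 2 := by positivity
  unfold w W T Phi
  rw [Complex.im_tsum (summable_modeTerm 0 (log_neg_of_mem ⟨h1, h2, h3⟩) _)]
  congr 1
  refine tsum_congr fun n => ?_
  have hpow : √(p ^ 2 + q ^ 2) ^ (mIdx n ^ 2)
      = Real.exp ((mIdx n : ℝ) ^ 2 * (Real.log (p ^ 2 + q ^ 2) / 2)) := by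
    rw [← Real.log_sqrt hs.le, ← Nat.cast_pow, Real.exp_nat_mul, Real.exp_log (Real.sqrt_pos.2 hs)]
  have harg : ∀ a φ : ℝ, (mIdx n : ℂ) ^ 2 * (a : ℂ) + Complex.I * (mIdx n : ℂ) * (φ : ℂ)
      = (((mIdx n : ℝ) ^ 2 * a : ℝ) : ℂ) + (((mIdx n : ℝ) * φ : ℝ) : ℂ) * Complex.I := by
    intros; push_cast; ring
  rw [hpow, modeTerm, harg, Complex.im_ofReal_mul, Complex.exp_add, ← Complex.ofReal_exp,
    Complex.im_ofReal_mul, Complex.exp_ofReal_mul_I_im]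
  unfold coef; ring

lemma hasDerivAt_T_fst (j : ℕ) {p q : ℝ} (h : (p, q) ∈ B1) :
    HasDerivAt (fun s => T j s q)
      ((p * T (j + 2) p q - Complex.I * q * T (j + 1) p q) / (p ^ 2 + q ^ 2)) p := by
  have hneg := log_neg_of_mem h
  obtain ⟨h1, h2, h3⟩ := h
  simp only at h1 h2 h3
  have hs : p ^ 2 + q ^ 2 ≠ 0 := by positivity
  have hsc : (p : ℂ) ^ 2 + (q : ℂ) ^ 2 ≠ 0 := by exact_mod_cast hs
  have ha : HasDerivAt (fun s : ℝ => Real.log (s ^ 2 + q ^ 2) / 2) (p / (p ^ 2 + q ^ 2)) p := by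
    refine (((((hasDerivAt_id' p).pow 2).add_const (q ^ 2)).log hs).div_const 2).congr_deriv ?_
    simp; field_simp
  have hφ : HasDerivAt (fun s : ℝ => Real.arctan (q / s)) (-q / (p ^ 2 + q ^ 2)) p := by
    refine ((hasDerivAt_const p q).div (hasDerivAt_id' p) h1.ne').arctan.congr_deriv ?_
    simp only [Pi.div_apply]; field_simp; ring
  refine (hasDerivAt_Phi_comp j ha hφ hneg).congr_deriv ?_
  unfold T; push_cast; field_simp; ring

lemma hasDerivAt_T_snd (j : ℕ) {p q : ℝ} (h : (p, q) ∈ B1) :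
    HasDerivAt (fun t => T j p t)
      ((q * T (j + 2) p q + Complex.I * p * T (j + 1) p q) / (p ^ 2 + q ^ 2)) q := by
  have hneg := log_neg_of_mem h
  obtain ⟨h1, h2, h3⟩ := h
  simp only at h1 h2 h3
  have hs : p ^ 2 + q ^ 2 ≠ 0 := by positivity
  have hsc : (p : ℂ) ^ 2 + (q : ℂ) ^ 2 ≠ 0 := by exact_mod_cast hs
  have ha : HasDerivAt (fun t : ℝ => Real.log (p ^ 2 + t ^ 2) / 2) (q / (p ^ 2 + q ^ 2)) q := by
    refine (((((hasDerivAt_id' q).pow 2).const_add (p ^ 2)).log hs).div_const 2).congr_deriv ?_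
    simp; field_simp
  have hφ : HasDerivAt (fun t : ℝ => Real.arctan (t / p)) (p / (p ^ 2 + q ^ 2)) q := by
    refine ((hasDerivAt_id' q).div_const p).arctan.congr_deriv ?_
    field_simp
  refine (hasDerivAt_Phi_comp j ha hφ hneg).congr_deriv ?_
  unfold T; push_cast; field_simp

/-! ### The differential equation -/

lemma isOpen_B1 : IsOpen B1 :=
  (isOpen_lt continuous_const continuous_fst).inter
    ((isOpen_lt continuous_const continuous_snd).inter
      (isOpen_lt (f := fun x : ℝ × ℝ => x.1 ^ 2 + x.2 ^ 2) (by fun_prop) continuous_const))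

lemma eventually_fst {p q : ℝ} (h : (p, q) ∈ B1) : ∀ᶠ s in 𝓝 p, (s, q) ∈ B1 :=
  (Continuous.prodMk_left q).continuousAt.eventually (isOpen_B1.mem_nhds h)

lemma eventually_snd {p q : ℝ} (h : (p, q) ∈ B1) : ∀ᶠ t in 𝓝 q, (p, t) ∈ B1 :=
  (Continuous.prodMk_right p).continuousAt.eventually (isOpen_B1.mem_nhds h)

/-- The partial derivatives of `w` are given by formulas valid only on the sector; agreement near the
point suffices to differentiate them again. -/
lemma deriv_of_eventually_im {f : ℝ → ℝ} {F : ℝ → ℂ} {F' : ℂ} {t : ℝ}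
    (hf : ∀ᶠ s in 𝓝 t, f s = (8 / π) * (F s).im) (hF : HasDerivAt F F' t) :
    deriv f t = (8 / π) * F'.im :=
  (((Complex.imCLM.hasFDerivAt.comp_hasDerivAt t hF).const_mul (8 / π)).congr_of_eventuallyEq
    hf).deriv

lemma wp_eq {p q : ℝ} (h : (p, q) ∈ B1) : wp p q =
    (8 / π) * ((p * T 2 p q - Complex.I * q * T 1 p q) / (p ^ 2 + q ^ 2)).im :=
  deriv_of_eventually_im ((eventually_fst h).mono fun _ hs => w_eq hs) (hasDerivAt_T_fst 0 h)

lemma wq_eq {p q : ℝ} (h : (p, q) ∈ B1) : wq p q =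
    (8 / π) * ((q * T 2 p q + Complex.I * p * T 1 p q) / (p ^ 2 + q ^ 2)).im :=
  deriv_of_eventually_im ((eventually_snd h).mono fun _ hs => w_eq hs) (hasDerivAt_T_snd 0 h)

/-- `w` satisfies `p² w_{qq} − 2pq w_{pq} + q² w_{pp} = 0` on `B₁`. -/
theorem stmt8 (p q : ℝ) (h : ((p, q) : ℝ × ℝ) ∈ B1) :
    p ^ 2 * wqq p q - 2 * p * q * wpq p q + q ^ 2 * wpp p q = 0 := by
  have hs : (p : ℂ) ^ 2 + (q : ℂ) ^ 2 ≠ 0 := by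
    have : p ^ 2 + q ^ 2 ≠ 0 := by
      have := h.1
      simp only at this
      positivity
    exact_mod_cast this
  have hid : ∀ x : ℝ, HasDerivAt (fun s : ℝ => (s : ℂ)) 1 x := fun x =>
    Complex.ofRealCLM.hasDerivAt
  have hp1 := hasDerivAt_T_fst 1 h
  have hp2 := hasDerivAt_T_fst 2 h
  have hq1 := hasDerivAt_T_snd 1 h
  have hq2 := hasDerivAt_T_snd 2 h
  have hpp : wpp p q = _ := deriv_of_eventually_im ((eventually_fst h).mono fun _ hs => wp_eq hs)
    ((((hid p).mul hp2).sub (hp1.const_mul (Complex.I * q))).div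
      (((hid p).pow 2).add_const ((q : ℂ) ^ 2)) hs)
  have hpq : wpq p q = _ := deriv_of_eventually_im ((eventually_snd h).mono fun _ hs => wp_eq hs)
    (((hq2.const_mul (p : ℂ)).sub (((hid q).const_mul Complex.I).mul hq1)).div
      (((hid q).pow 2).const_add ((p : ℂ) ^ 2)) hs)
  have hqq : wqq p q = _ := deriv_of_eventually_im ((eventually_snd h).mono fun _ hs => wq_eq hs)
    ((((hid q).mul hq2).add (hq1.const_mul (Complex.I * p))).div
      (((hid q).pow 2).const_add ((p : ℂ) ^ 2)) hs)
  -- The coefficients are real, so the equation follows from its complexified version.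
  have key : ∀ A B C : ℂ, (p : ℂ) ^ 2 * A - 2 * p * q * B + (q : ℂ) ^ 2 * C = 0 →
      p ^ 2 * (8 / π * A.im) - 2 * p * q * (8 / π * B.im) + q ^ 2 * (8 / π * C.im) = 0 := by
    intro A B C hABC
    have e : (p : ℂ) ^ 2 * A - 2 * p * q * B + (q : ℂ) ^ 2 * C =
      ((p ^ 2 : ℝ) : ℂ) * A - ((2 * p * q : ℝ) : ℂ) * B + ((q ^ 2 : ℝ) : ℂ) * C := by
      push_cast; ring
    have him := congrArg Complex.im (e.symm.trans hABC)
    rw [Complex.add_im, Complex.sub_im, Complex.im_ofReal_mul, Complex.im_ofReal_mul,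
      Complex.im_ofReal_mul, Complex.zero_im] at him
    linear_combination (8 / π) * him
  rw [hpp, hpq, hqq]
  apply key
  simp only [Pi.add_apply, Pi.sub_apply, Pi.mul_apply]
  field_simp
  ring_nf
  simp only [Complex.I_sq]
  ring
end

section
/- The gradient map ∇wᵀ maps the open sector B₁ into the open square Ω₁ = (0,1)²; that is, 0 < w_p(p,q) < 1 and 0 < w_q(p,q) < 1 for all (p,q) ∈ B₁. Moreover, if (p_j) is a sequence in B₁ converging to a boundary point of B₁ and the limit x* := lim_{j→∞} ∇wᵀ(p_j) exists, then x* lies on the boundary of Ω₁. -/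
/-!
In polar coordinates `p = r cos θ`, `q = r sin θ`, termwise differentiation of the series for `W`
gives `w_p = U(r, θ)` and `w_q = U(r, π/2 - θ)` (`wp_eq`, `wq_eq`) for one function

  `U(r, θ) = (8/π) ∑ r^(m² - 1) (m cos θ sin(mθ) - sin θ cos(mθ)) / (m² - 1)`,  `m = 2, 6, 10, …`.

Since `m² - 1 = 16n(n+1) + 3` for `m = 4n + 2`, its angular derivative is a theta series:
`∂U/∂θ = (8/π) cos θ · r³ · Θ(r¹⁶, 2θ)` with `Θ(q, z) = ∑ q^(n(n+1)) cos((2n+1)z)`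
(`hasDerivAt_U`). The Jacobi triple product shows `Θ(q, z) ≥ L cos z` with `L > 0` whenever
`cos z ≥ 0` (`Th_lower`), and `Θ(q, π - z) = -Θ(q, z)`; hence `U(r, ·)` increases on `[0, π/4]` and
decreases on `[π/4, π/2]`.

* Positivity: `U(r, 0) = 0` and `U(r, π/2) = (8/π) ∑ r^(m² - 1) / (m² - 1) > 0`.
* Upper bound: the maximum is `U(r, π/4) = (4√2/π) V(r)` with the alternating series
  `V(r) = ∑ (-1)ⁿ r^(m² - 1) m / (m² - 1)`. Up to a positive factor `V'(r)` is `-∂Θ/∂z` at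
  `z = π/2`, which is positive by the same lower bound on `Θ`, so `V` is strictly increasing; its
  limit at `r = 1` is at most `½ (1 + 1/3 - 1/5 - 1/7 + …) = π / (4√2)`, so `U < 1`.
* Boundary: the limit of the gradients lies in the closure of `Ω₁`, so it must only be kept out of
  `Ω₁`. Near the axes `U(r, θ) ≤ 4 (1 - r)⁻¹ r sin θ` forces `w_p → 0` or `w_q → 0`. Near the arc,
  one of `θ`, `π/2 - θ` is at least `π/4`, so `max(w_p, w_q) ≥ U(r, π/2)`, which tends to
  `(8/π) ∑ 1 / (m² - 1) = 1` by the Leibniz series for `π/4`.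
-/

open Real Set Topology Filter

/-! ### Positivity of the theta series -/

/-- The `q`-Pochhammer symbol `(Q; Q)_k = ∏_{j=1}^k (1 - Q^j)`. -/
noncomputable def qP (Q : ℝ) (k : ℕ) : ℝ := ∏ j ∈ Finset.range k, (1 - Q ^ (j + 1))

/-- The coefficient `q^(n(n+1)) [2N+1 choose N-n]`, with the Gaussian binomial taken in base `q²`;
zero for `n > N`. These are the Fourier coefficients of the truncated Jacobi product. -/
noncomputable def qA (q : ℝ) (N n : ℕ) : ℝ :=
  if n ≤ N then q ^ (n * (n + 1)) * qP (q ^ 2) (2 * N + 1) /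
    (qP (q ^ 2) (N - n) * qP (q ^ 2) (N + n + 1)) else 0

lemma qP_succ (Q : ℝ) (k : ℕ) : qP Q (k + 1) = qP Q k * (1 - Q ^ (k + 1)) := by
  simp [qP, Finset.prod_range_succ]

lemma qP_pos {Q : ℝ} (h0 : 0 < Q) (h1 : Q < 1) (k : ℕ) : 0 < qP Q k :=
  Finset.prod_pos fun j _ => sub_pos.2 (pow_lt_one₀ h0.le h1 (Nat.succ_ne_zero j))

/-- `qA` with the upper index parametrized as `n + k`, which avoids the natural subtraction
`N - n`. -/
lemma qA_add {q : ℝ} (n k : ℕ) : qA q (n + k) n = q ^ (n * (n + 1)) *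
    qP (q ^ 2) (2 * (n + k) + 1) / (qP (q ^ 2) k * qP (q ^ 2) (2 * n + k + 1)) := by
  rw [qA, if_pos (Nat.le_add_right n k), Nat.add_sub_cancel_left]
  congr 4; ring

lemma qA_of_lt {q : ℝ} {N n : ℕ} (h : N < n) : qA q N n = 0 := if_neg (not_le.2 h)

/-- The case `n = 0` of the recurrence `qA_succ_succ`; the missing coefficient of index `-1`
equals the one of index `0` because `cos` is even. -/
lemma qA_succ_zero {q : ℝ} (h0 : 0 < q) (h1 : q < 1) (N : ℕ) :
    qA q (N + 1) 0 = (1 + q ^ (4 * (N + 1))) * qA q N 0 +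
      q ^ (2 * (N + 1)) * (qA q N 0 + qA q N 1) := by
  have hP := fun k => (qP_pos (pow_pos h0 2) (pow_lt_one₀ h0.le h1 two_ne_zero) k).ne'
  have hQ : ∀ k : ℕ, 1 - (q ^ 2) ^ (k + 1) ≠ 0 := fun k =>
    (sub_pos.2 (pow_lt_one₀ (by positivity)
      (pow_lt_one₀ h0.le h1 two_ne_zero) (Nat.succ_ne_zero k))).ne'
  have e0 : ∀ M, qA q M 0 = qP (q ^ 2) (2 * M + 1) / (qP (q ^ 2) M * qP (q ^ 2) (M + 1)) := by
    intro M; simp [qA]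
  rcases N with _ | k
  · rw [qA_of_lt (show 0 < 1 by simp), e0, e0]
    simp only [qP, Finset.prod_range_succ, Finset.prod_range_zero, one_mul, mul_zero]
    have := hQ 0; have := hQ 1
    field_simp
    ring
  · have e1 := qA_add (q := q) 1 k
    rw [show k + 1 + 1 = k + 2 by ring, e0, e0, show k + 1 = 1 + k by ring, e1]
    rw [show 2 * (k + 2) + 1 = (2 * (1 + k) + 1) + 1 + 1 by ring,
      show k + 2 + 1 = k + 1 + 1 + 1 by ring, show k + 2 = k + 1 + 1 by ring,
      show 2 * 1 + k + 1 = k + 1 + 1 + 1 by ring, show 1 + k = k + 1 by ring]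
    simp only [qP_succ]
    have := hP k; have := hP (2 * (k + 1)); have := hQ k; have := hQ (k + 1); have := hQ (k + 2)
    have := hQ (2 * (k + 1))
    field_simp
    ring

/-- Multiplying the truncated product by its next factor `1 + 2 q^(2(N+1)) cos 2z + q^(4(N+1))`
acts on the Fourier coefficients by this recurrence. -/
lemma qA_succ_succ {q : ℝ} (h0 : 0 < q) (h1 : q < 1) (N n : ℕ) :
    qA q (N + 1) (n + 1) = (1 + q ^ (4 * (N + 1))) * qA q N (n + 1) +
      q ^ (2 * (N + 1)) * (qA q N n + qA q N (n + 2)) := by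
  have hP := fun k => (qP_pos (pow_pos h0 2) (pow_lt_one₀ h0.le h1 two_ne_zero) k).ne'
  have hQ : ∀ k : ℕ, 1 - (q ^ 2) ^ (k + 1) ≠ 0 := fun k =>
    (sub_pos.2 (pow_lt_one₀ (by positivity)
      (pow_lt_one₀ h0.le h1 two_ne_zero) (Nat.succ_ne_zero k))).ne'
  rcases lt_or_ge N n with h | h
  · rw [qA_of_lt (by omega), qA_of_lt (by omega), qA_of_lt h, qA_of_lt (by omega)]; ring
  obtain ⟨k, rfl⟩ := Nat.exists_eq_add_of_le h
  have eL := qA_add (q := q) (n + 1) k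
  have e0 := qA_add (q := q) n k
  rw [show n + k + 1 = n + 1 + k by ring, eL, e0]
  -- For `N = n` and `N = n + 1` the coefficients of index above `N` vanish, so the closed form of
  -- `qA` does not cover them.
  rcases k with _ | _ | k
  · rw [qA_of_lt (by omega), qA_of_lt (by omega)]
    simp only [add_zero]
    have := hP 0; have := hP (2 * n + 1); have := hP (2 * (n + 1) + 1)
    field_simp
    ring
  · have e1 := qA_add (q := q) (n + 1) 0
    simp only [zero_add, add_zero] at e1 ⊢
    rw [qA_of_lt (show n + 1 < n + 2 by omega), e1]
    rw [show 2 * (n + 1 + 1) + 1 = 2 * n + 4 + 1 by ring,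
      show 2 * (n + 1) + 1 + 1 = 2 * n + 3 + 1 by ring,
      show 2 * (n + 1) + 1 = 2 * n + 2 + 1 by ring]
    simp only [qP_succ]
    have := hP 0; have := hP (2 * n); have := hQ 0; have := hQ (2 * n); have := hQ (2 * n + 1)
    have := hQ (2 * n + 2); have := hQ (2 * n + 3)
    field_simp
    ring
  · have e1 := qA_add (q := q) (n + 1) (k + 1)
    have e2 := qA_add (q := q) (n + 2) k
    rw [show n + (k + 1 + 1) = n + 1 + (k + 1) by ring, e1,
      show n + 1 + (k + 1) = n + 2 + k by ring, e2]
    rw [show 2 * (n + 1 + (k + 1 + 1)) + 1 = 2 * (n + 2 + k) + 1 + 1 + 1 by ring,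
      show 2 * (n + 1) + (k + 1 + 1) + 1 = 2 * n + k + 2 + 1 + 1 + 1 by ring,
      show 2 * n + (k + 1 + 1) + 1 = 2 * n + k + 2 + 1 by ring,
      show 2 * (n + 1) + (k + 1) + 1 = 2 * n + k + 2 + 1 + 1 by ring,
      show 2 * (n + 2) + k + 1 = 2 * n + k + 2 + 1 + 1 + 1 by ring]
    simp only [qP_succ]
    have := hP k; have := hP (2 * (n + 2 + k)); have := hP (2 * n + k + 2)
    have := hQ k; have := hQ (k + 1); have := hQ (2 * n + k + 2)
    have := hQ (2 * n + k + 2 + 1); have := hQ (2 * n + k + 2 + 1 + 1)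
    have := hQ (2 * (n + 2 + k))
    field_simp
    ring

/-- The infinite product `(Q; Q)_∞` is positive and bounds all finite ones from below. -/
lemma qP_limit {Q : ℝ} (h0 : 0 < Q) (h1 : Q < 1) :
    ∃ L : ℝ, 0 < L ∧ Tendsto (qP Q) atTop (𝓝 L) ∧ ∀ k, L ≤ qP Q k := by
  have hs : Summable fun j : ℕ => ‖-Q ^ (j + 1)‖ := by
    simpa [abs_of_pos h0] using
      (summable_nat_add_iff 1).mpr (summable_geometric_of_lt_one h0.le h1)
  have hm : Multipliable fun j : ℕ => 1 + -Q ^ (j + 1) := multipliable_one_add_of_summable hs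
  have ht : Tendsto (qP Q) atTop (𝓝 (∏' j : ℕ, (1 + -Q ^ (j + 1)))) := by
    simpa only [qP, sub_eq_add_neg, funext_iff] using! hm.hasProd.tendsto_prod_nat
  have hanti : Antitone (qP Q) := antitone_nat_of_succ_le fun k => by
    rw [qP_succ]
    exact mul_le_of_le_one_right (qP_pos h0 h1 k).le (sub_le_self 1 (by positivity))
  have hle := hanti.le_of_tendsto ht
  have hne : ∏' j : ℕ, (1 + -Q ^ (j + 1)) ≠ 0 := tprod_one_add_ne_zero_of_summable
    (fun j => by
      have := pow_lt_one₀ h0.le h1 (Nat.succ_ne_zero j)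
      simp only [Nat.succ_eq_add_one] at this
      linarith) hs
  exact ⟨_, lt_of_le_of_ne (ge_of_tendsto' ht fun k => (qP_pos h0 h1 k).le) hne.symm, ht, hle⟩

lemma cos_mul_odd (z : ℝ) (n : ℕ) : 2 * cos (2 * z) * cos ((2 * (n + 1 : ℕ) + 1) * z) =
    cos ((2 * (n + 2 : ℕ) + 1) * z) + cos ((2 * n + 1) * z) := by
  rw [cos_add_cos]
  push_cast
  rw [show ((2 * ((n : ℝ) + 2) + 1) * z + (2 * n + 1) * z) / 2 = (2 * (n + 1) + 1) * z by ring,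
    show ((2 * ((n : ℝ) + 2) + 1) * z - (2 * n + 1) * z) / 2 = 2 * z by ring]
  ring

/-- Multiplication of an odd cosine polynomial by `2 cos 2z` shifts the frequencies by one step up
and one step down; the lowest one is reflected to itself. -/
lemma cos_mul_sum (z : ℝ) (a : ℕ → ℝ) (M : ℕ) :
    2 * cos (2 * z) * ∑ n ∈ Finset.range (M + 1), a n * cos ((2 * n + 1) * z) =
      a 0 * cos z + ∑ n ∈ Finset.range (M + 1), a n * cos ((2 * (n + 1 : ℕ) + 1) * z) +
        ∑ n ∈ Finset.range M, a (n + 1) * cos ((2 * n + 1) * z) := by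
  induction M with
  | zero =>
    have h : 2 * cos (2 * z) * cos z = cos (3 * z) + cos z := by
      rw [cos_add_cos, show (3 * z + z) / 2 = 2 * z by ring, show (3 * z - z) / 2 = z by ring]
    norm_num
    linear_combination a 0 * h
  | succ M ih =>
    rw [Finset.sum_range_succ, mul_add, ih, Finset.sum_range_succ _ (M + 1),
      Finset.sum_range_succ (fun n : ℕ => a (n + 1) * cos ((2 * n + 1) * z)) M]
    linear_combination a (M + 1) * cos_mul_odd z M

/-- The finite form (due to Cauchy) of the Jacobi triple product identity. -/
lemma finite_triple {q : ℝ} (h0 : 0 < q) (h1 : q < 1) (z : ℝ) (N : ℕ) :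
    ∑ n ∈ Finset.range (N + 1), qA q N n * cos ((2 * n + 1) * z) =
      cos z * ∏ j ∈ Finset.range N,
        (1 + 2 * q ^ (2 * (j + 1)) * cos (2 * z) + q ^ (4 * (j + 1))) := by
  induction N with
  | zero =>
    have h := sub_pos.2 (pow_lt_one₀ h0.le h1 two_ne_zero)
    simp [qA, qP, h.ne']
  | succ N ih =>
    rw [Finset.prod_range_succ, ← mul_assoc, ← ih]
    have h := cos_mul_sum z (qA q N) N
    set c : ℕ → ℝ := fun n => cos ((2 * n + 1) * z) with hc
    have hS : ∑ n ∈ Finset.range (N + 1), qA q N n * cos ((2 * n + 1) * z) =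
      ∑ n ∈ Finset.range (N + 1), qA q N (n + 1) * c (n + 1) + qA q N 0 * c 0 := by
      have := Finset.sum_range_succ' (fun n => qA q N n * c n) (N + 1)
      rw [Finset.sum_range_succ, qA_of_lt (Nat.lt_succ_self N)] at this
      simpa using this
    have hR : ∑ n ∈ Finset.range N, qA q N (n + 1) * c n =
      ∑ n ∈ Finset.range (N + 1), qA q N (n + 2) * c (n + 1) + qA q N 1 * c 0 := by
      have := Finset.sum_range_succ' (fun n => qA q N (n + 1) * c n) (N + 1)
      rw [Finset.sum_range_succ, Finset.sum_range_succ, qA_of_lt (show N < N + 1 by omega),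
        qA_of_lt (show N < N + 1 + 1 by omega)] at this
      simpa using this
    have hT : ∑ n ∈ Finset.range (N + 1 + 1), qA q (N + 1) n * c n =
        (1 + q ^ (4 * (N + 1))) * (∑ n ∈ Finset.range (N + 1), qA q N (n + 1) * c (n + 1)
          + qA q N 0 * c 0) + q ^ (2 * (N + 1)) * (qA q N 0 * c 0 +
          ∑ n ∈ Finset.range (N + 1), qA q N n * c (n + 1) +
          (∑ n ∈ Finset.range (N + 1), qA q N (n + 2) * c (n + 1) + qA q N 1 * c 0)) := by
      rw [Finset.sum_range_succ', qA_succ_zero h0 h1]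
      simp only [qA_succ_succ h0 h1, mul_add, add_mul, Finset.sum_add_distrib, Finset.mul_sum,
        mul_assoc]
      ring
    have hc0 : c 0 = cos z := by simp [hc]
    change ∑ n ∈ Finset.range (N + 1 + 1), qA q (N + 1) n * c n = _
    change 2 * cos (2 * z) * ∑ n ∈ Finset.range (N + 1), qA q N n * cos ((2 * n + 1) * z) =
      qA q N 0 * cos z + ∑ n ∈ Finset.range (N + 1), qA q N n * c (n + 1) +
        ∑ n ∈ Finset.range N, qA q N (n + 1) * c n at h
    rw [hT, ← hS, ← hR, hc0, ← h]
    ring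

/-- Half of `q^(-1/4)` times the Jacobi theta function `θ₂(z, q)`. -/
noncomputable def Th (q z : ℝ) : ℝ := ∑' n : ℕ, q ^ (n * (n + 1)) * cos ((2 * n + 1) * z)

lemma pow_quad_le {q : ℝ} (h0 : 0 < q) (h1 : q < 1) (n : ℕ) : q ^ (n * (n + 1)) ≤ q ^ n :=
  pow_le_pow_of_le_one h0.le h1.le (Nat.le_mul_of_pos_right n n.succ_pos)

lemma summable_Th {q : ℝ} (h0 : 0 < q) (h1 : q < 1) (z : ℝ) :
    Summable fun n : ℕ => q ^ (n * (n + 1)) * cos ((2 * n + 1) * z) := by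
  refine .of_norm_bounded (summable_geometric_of_lt_one h0.le h1) fun n => ?_
  rw [norm_mul, norm_of_nonneg (by positivity)]
  exact (mul_le_of_le_one_right (by positivity) (abs_cos_le_one _)).trans (pow_quad_le h0 h1 n)

/-- Letting `N → ∞` in `finite_triple`: `Θ(q, z)` is `cos z` times a product whose factors are at
least `(1 - q^(2j))²`, times the constant `∏ (1 - q^(2j))`. -/
lemma Th_lower {q : ℝ} (h0 : 0 < q) (h1 : q < 1) :
    ∃ L : ℝ, 0 < L ∧ ∀ z, 0 ≤ cos z → L * cos z ≤ Th q z := by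
  have hQ0 : 0 < q ^ 2 := by positivity
  have hQ1 : q ^ 2 < 1 := pow_lt_one₀ h0.le h1 two_ne_zero
  obtain ⟨L, hL, hlim, hle⟩ := qP_limit hQ0 hQ1
  have hP1 : ∀ k, qP (q ^ 2) k ≤ 1 := fun k => Finset.prod_le_one
    (fun j _ => (sub_pos.2 (pow_lt_one₀ hQ0.le hQ1 (Nat.succ_ne_zero j))).le)
    fun j _ => sub_le_self 1 (by positivity)
  refine ⟨L ^ 3, by positivity, fun z hz => ?_⟩
  have hbound : ∀ N n, |qA q N n| ≤ q ^ n * (L * L)⁻¹ := by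
    intro N n
    rw [qA]
    split_ifs with h
    · rw [abs_of_pos (div_pos (mul_pos (by positivity) (qP_pos hQ0 hQ1 _))
        (mul_pos (qP_pos hQ0 hQ1 _) (qP_pos hQ0 hQ1 _))), div_eq_mul_inv]
      gcongr
      · exact inv_nonneg.2 (mul_pos (qP_pos hQ0 hQ1 _) (qP_pos hQ0 hQ1 _)).le
      · exact (mul_le_of_le_one_right (by positivity) (hP1 _)).trans (pow_quad_le h0 h1 n)
      · exact (qP_pos hQ0 hQ1 _).le
      · exact hle _
      · exact hle _
    · rw [abs_zero]; positivity
  have hlimA : ∀ n, Tendsto (fun N => qA q N n) atTop (𝓝 (q ^ (n * (n + 1)) * L / (L * L))) := by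
    intro n
    have : Tendsto (fun N => q ^ (n * (n + 1)) * qP (q ^ 2) (2 * N + 1) /
        (qP (q ^ 2) (N - n) * qP (q ^ 2) (N + n + 1))) atTop
        (𝓝 (q ^ (n * (n + 1)) * L / (L * L))) := by
      refine Tendsto.div (tendsto_const_nhds.mul (hlim.comp ?_)) ((hlim.comp ?_).mul
        (hlim.comp ?_)) (by positivity)
      · exact tendsto_atTop_mono (fun N => by simp only [id]; omega) tendsto_id
      · exact tendsto_sub_atTop_nat n
      · exact tendsto_atTop_mono (fun N => by simp only [id]; omega) tendsto_id
    refine this.congr' ?_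
    filter_upwards [eventually_ge_atTop n] with N hN
    rw [qA, if_pos hN]
  have hT : Tendsto (fun N => ∑' n : ℕ, qA q N n * cos ((2 * n + 1) * z)) atTop
      (𝓝 (∑' n : ℕ, q ^ (n * (n + 1)) * L / (L * L) * cos ((2 * n + 1) * z))) := by
    refine tendsto_tsum_of_dominated_convergence (bound := fun n => q ^ n * (L * L)⁻¹)
      ((summable_geometric_of_lt_one h0.le h1).mul_right _) (fun n => (hlimA n).mul_const _)
      (Eventually.of_forall fun N n => ?_)
    rw [norm_mul]
    exact (mul_le_of_le_one_right (abs_nonneg _) (abs_cos_le_one _)).trans (hbound N n)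
  have hfin : ∀ N, ∑' n : ℕ, qA q N n * cos ((2 * n + 1) * z) = cos z * ∏ j ∈ Finset.range N,
        (1 + 2 * q ^ (2 * (j + 1)) * cos (2 * z) + q ^ (4 * (j + 1))) := by
    intro N
    rw [← finite_triple h0 h1, tsum_eq_sum]
    intro n hn
    rw [qA_of_lt (by simpa using hn), zero_mul]
  have hge : ∀ N, L ^ 2 * cos z ≤ ∑' n : ℕ, qA q N n * cos ((2 * n + 1) * z) := by
    intro N
    rw [hfin, mul_comm]
    refine mul_le_mul_of_nonneg_left ?_ hz
    calc L ^ 2 ≤ qP (q ^ 2) N ^ 2 := by gcongr; exact hle N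
      _ = ∏ j ∈ Finset.range N, (1 - (q ^ 2) ^ (j + 1)) ^ 2 := by rw [qP, Finset.prod_pow]
      _ ≤ _ := by
        refine Finset.prod_le_prod (fun j _ => by positivity) fun j _ => ?_
        have h2 := neg_one_le_cos (2 * z)
        have h3 : (0 : ℝ) ≤ q ^ (2 * (j + 1)) := by positivity
        rw [← pow_mul, show 4 * (j + 1) = 2 * (j + 1) * 2 by ring, pow_mul _ _ 2]
        nlinarith
  have := ge_of_tendsto' hT hge
  rw [show (fun n : ℕ => q ^ (n * (n + 1)) * L / (L * L) * cos ((2 * n + 1) * z)) =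
    fun n : ℕ => L⁻¹ * (q ^ (n * (n + 1)) * cos ((2 * n + 1) * z)) by
      funext n; field_simp, tsum_mul_left] at this
  change _ ≤ L⁻¹ * Th q z at this
  calc L ^ 3 * cos z = L * (L ^ 2 * cos z) := by ring
    _ ≤ L * (L⁻¹ * Th q z) := by gcongr
    _ = Th q z := by field_simp

lemma Th_pi_sub (q z : ℝ) : Th q (π - z) = - Th q z := by
  rw [Th, Th, ← tsum_neg]
  congr 1; funext n
  rw [show (2 * (n : ℝ) + 1) * (π - z) = π - (2 * n + 1) * z + n * (2 * π) by ring,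
    cos_add_nat_mul_two_pi, cos_pi_sub]
  ring

lemma Th_le {q : ℝ} (h0 : 0 < q) (h1 : q < 1) (z : ℝ) : Th q z ≤ (1 - q)⁻¹ := by
  rw [← tsum_geometric_of_lt_one h0.le h1]
  refine (summable_Th h0 h1 z).tsum_le_tsum (fun n => ?_) (summable_geometric_of_lt_one h0.le h1)
  exact (mul_le_of_le_one_right (by positivity) (cos_le_one _)).trans (pow_quad_le h0 h1 n)

/-! ### Monotonicity and bounds for the polar gradient component -/

/-- The exponent `m² - 1` for the frequency `m = 4n + 2`, written without subtraction. -/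
def ex (n : ℕ) : ℕ := 16 * n ^ 2 + 16 * n + 3

/-- The frequency `m = 4n + 2` as a real number. -/
noncomputable def mu (n : ℕ) : ℝ := 4 * n + 2

/-- `(π/8) ∂W/∂r`. -/
noncomputable def sX (r θ : ℝ) : ℝ :=
  ∑' n : ℕ, r ^ ex n * (mu n * sin (mu n * θ) / (mu n ^ 2 - 1))

/-- `(π/8) r⁻¹ ∂W/∂θ`. -/
noncomputable def sY (r θ : ℝ) : ℝ := ∑' n : ℕ, r ^ ex n * (cos (mu n * θ) / (mu n ^ 2 - 1))

/-- The value of `sX` at `θ = π/4`, an alternating series. -/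
noncomputable def sV (r : ℝ) : ℝ := ∑' n : ℕ, (-1) ^ n * (r ^ ex n * (mu n / (mu n ^ 2 - 1)))

/-- The partial derivative `w_p` in polar coordinates. -/
noncomputable def U (r θ : ℝ) : ℝ := 8 / π * (cos θ * sX r θ - sin θ * sY r θ)

lemma two_le_mu (n : ℕ) : 2 ≤ mu n := by
  unfold mu; have : (0 : ℝ) ≤ n := n.cast_nonneg; linarith

lemma mu_le (n : ℕ) : mu n ≤ mu n ^ 2 - 1 := by nlinarith [two_le_mu n]

lemma mu_sq_pos (n : ℕ) : 0 < mu n ^ 2 - 1 := by linarith [two_le_mu n, mu_le n]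

lemma cast_ex (n : ℕ) : (ex n : ℝ) = mu n ^ 2 - 1 := by
  simp only [ex, mu]; push_cast; ring

lemma mIdx_sq (n : ℕ) : mIdx n ^ 2 = ex n + 1 := by simp only [ex, mIdx]; ring

lemma cast_mIdx (n : ℕ) : (mIdx n : ℝ) = mu n := by simp [mIdx, mu]

lemma pow_ex_le {r : ℝ} (h0 : 0 ≤ r) (h1 : r ≤ 1) {k n : ℕ} (hk : n ≤ k) : r ^ k ≤ r ^ n :=
  pow_le_pow_of_le_one h0 h1 hk

lemma le_ex (n : ℕ) : n + 1 ≤ ex n := by unfold ex; nlinarith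

lemma summable_mu {R : ℝ} (h0 : 0 ≤ R) (h1 : R < 1) : Summable fun n : ℕ => R ^ n * mu n := by
  have ha := summable_geometric_of_lt_one h0 h1
  have hb := summable_pow_mul_geometric_of_norm_lt_one (r := R) 1
    (by rwa [norm_of_nonneg h0])
  refine ((hb.mul_left 4).add (ha.mul_left 2)).congr fun n => ?_
  simp only [mu]; ring

/-- The majorant behind every termwise differentiation below: `∑ Rⁿ m` converges and dominates
`r ^ k * a` as soon as `|r| ≤ R < 1`, `n ≤ k` and `|a| ≤ m`. -/
lemma term_bound {r R a : ℝ} (hr : |r| ≤ R) (hR : R < 1) {k n : ℕ} (hk : n ≤ k)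
    (ha : |a| ≤ mu n) : ‖r ^ k * a‖ ≤ R ^ n * mu n := by
  rw [norm_mul, norm_pow, norm_eq_abs, norm_eq_abs]
  have h0 : 0 ≤ R := (abs_nonneg r).trans hr
  gcongr
  exact (pow_le_pow_left₀ (abs_nonneg r) hr k).trans (pow_ex_le h0 hR.le hk)

lemma abs_sin_coeff (n : ℕ) (x : ℝ) : |mu n * sin x / (mu n ^ 2 - 1)| ≤ 1 := by
  have h := two_le_mu n
  rw [abs_div, abs_of_pos (mu_sq_pos n), div_le_one (mu_sq_pos n), abs_mul,
    abs_of_pos (by linarith)]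
  exact (mul_le_of_le_one_right (by linarith) (abs_sin_le_one x)).trans (mu_le n)

lemma abs_cos_coeff (n : ℕ) (x : ℝ) : |cos x / (mu n ^ 2 - 1)| ≤ 1 := by
  have h := two_le_mu n
  rw [abs_div, abs_of_pos (mu_sq_pos n), div_le_one (mu_sq_pos n)]
  linarith [abs_cos_le_one x, mu_le n]

lemma abs_cos_coeff' (n : ℕ) (x : ℝ) : |mu n ^ 2 * cos x / (mu n ^ 2 - 1)| ≤ mu n := by
  have h := two_le_mu n
  rw [abs_div, abs_of_pos (mu_sq_pos n), div_le_iff₀ (mu_sq_pos n), abs_mul,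
    abs_of_pos (by positivity)]
  calc mu n ^ 2 * |cos x| ≤ mu n ^ 2 := mul_le_of_le_one_right (by positivity) (abs_cos_le_one x)
    _ = mu n * mu n := sq _
    _ ≤ _ := by gcongr; exact mu_le n

lemma summable_sX {r : ℝ} (h0 : 0 ≤ r) (h1 : r < 1) (θ : ℝ) :
    Summable fun n : ℕ => r ^ ex n * (mu n * sin (mu n * θ) / (mu n ^ 2 - 1)) :=
  .of_norm_bounded (summable_mu h0 h1) fun n => term_bound (abs_of_nonneg h0).le h1
    (by have := le_ex n; omega) ((abs_sin_coeff n _).trans (by linarith [two_le_mu n]))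

lemma summable_sY {r : ℝ} (h0 : 0 ≤ r) (h1 : r < 1) (θ : ℝ) :
    Summable fun n : ℕ => r ^ ex n * (cos (mu n * θ) / (mu n ^ 2 - 1)) :=
  .of_norm_bounded (summable_mu h0 h1) fun n => term_bound (abs_of_nonneg h0).le h1
    (by have := le_ex n; omega) ((abs_cos_coeff n _).trans (by linarith [two_le_mu n]))

lemma hasDerivAt_sX {r : ℝ} (h0 : 0 ≤ r) (h1 : r < 1) (θ : ℝ) :
    HasDerivAt (sX r) (∑' n : ℕ, r ^ ex n * (mu n ^ 2 * cos (mu n * θ) / (mu n ^ 2 - 1))) θ := by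
  have hg : ∀ (n : ℕ) (y : ℝ),
      HasDerivAt (fun y => r ^ ex n * (mu n * sin (mu n * y) / (mu n ^ 2 - 1)))
        (r ^ ex n * (mu n ^ 2 * cos (mu n * y) / (mu n ^ 2 - 1))) y := fun n y => by
    have h := ((((hasDerivAt_id' y).const_mul (mu n)).sin.const_mul (mu n)).div_const
      (mu n ^ 2 - 1)).const_mul (r ^ ex n)
    exact h.congr_deriv (by ring)
  exact hasDerivAt_tsum (summable_mu h0 h1) hg (fun n y => term_bound (abs_of_nonneg h0).le h1
    (by have := le_ex n; omega) (abs_cos_coeff' n _)) (summable_sX h0 h1 0) θ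

lemma hasDerivAt_sY {r : ℝ} (h0 : 0 ≤ r) (h1 : r < 1) (θ : ℝ) :
    HasDerivAt (sY r) (-sX r θ) θ := by
  have hg : ∀ (n : ℕ) (y : ℝ),
      HasDerivAt (fun y => r ^ ex n * (cos (mu n * y) / (mu n ^ 2 - 1)))
        (-(r ^ ex n * (mu n * sin (mu n * y) / (mu n ^ 2 - 1)))) y := fun n y => by
    have h := (((hasDerivAt_id' y).const_mul (mu n)).cos.div_const
      (mu n ^ 2 - 1)).const_mul (r ^ ex n)
    exact h.congr_deriv (by ring)
  rw [sX, ← tsum_neg]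
  refine hasDerivAt_tsum (summable_mu h0 h1) hg (fun n y => ?_) (summable_sY h0 h1 0) θ
  rw [norm_neg]
  exact term_bound (abs_of_nonneg h0).le h1 (by have := le_ex n; omega)
    ((abs_sin_coeff n _).trans (by linarith [two_le_mu n]))

/-- The factors `m² - 1` cancel in the angular derivative of `U`, leaving a theta series. -/
lemma hasDerivAt_U {r : ℝ} (h0 : 0 ≤ r) (h1 : r < 1) (θ : ℝ) :
    HasDerivAt (U r) (8 / π * (cos θ * (r ^ 3 * Th (r ^ 16) (2 * θ)))) θ := by
  have h := ((((hasDerivAt_cos θ).mul (hasDerivAt_sX h0 h1 θ)).sub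
    ((hasDerivAt_sin θ).mul (hasDerivAt_sY h0 h1 θ)))).const_mul (8 / π)
  convert! h using 1
  -- The terms `± sin θ · sX` cancel; termwise `(m² cos mθ - cos mθ) / (m² - 1) = cos mθ`.
  have key : r ^ 3 * Th (r ^ 16) (2 * θ) =
      (∑' n : ℕ, r ^ ex n * (mu n ^ 2 * cos (mu n * θ) / (mu n ^ 2 - 1))) - sY r θ := by
    have hs : Summable fun n : ℕ => r ^ ex n * (mu n ^ 2 * cos (mu n * θ) / (mu n ^ 2 - 1)) :=
      .of_norm_bounded (summable_mu h0 h1) fun n => term_bound (abs_of_nonneg h0).le h1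
        (by have := le_ex n; omega) (abs_cos_coeff' n _)
    rw [sY, ← hs.tsum_sub (summable_sY h0 h1 θ), Th, ← tsum_mul_left]
    congr 1; funext n
    have h2 := (mu_sq_pos n).ne'
    rw [show (2 * (n : ℝ) + 1) * (2 * θ) = mu n * θ by unfold mu; ring,
      show ex n = 3 + 16 * (n * (n + 1)) by unfold ex; ring, pow_add, pow_mul]
    field_simp
    ring
  rw [key]; ring

lemma mu_quarter (n : ℕ) : mu n * (π / 4) = n * π + π / 2 := by unfold mu; ring

lemma U_reflect (r θ : ℝ) : U r (π / 2 - θ) = 8 / π * (sin θ * sX r θ + cos θ * sY r θ) := by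
  have e : ∀ n, mu n * (π / 2 - θ) = π - mu n * θ + n * (2 * π) := fun n => by unfold mu; ring
  have hX : sX r (π / 2 - θ) = sX r θ := by
    simp only [sX, e, sin_add_nat_mul_two_pi, sin_pi_sub]
  have hY : sY r (π / 2 - θ) = -sY r θ := by
    simp only [sY, e, cos_add_nat_mul_two_pi, cos_pi_sub, neg_div, mul_neg, tsum_neg]
  rw [U, hX, hY, cos_pi_div_two_sub, sin_pi_div_two_sub]; ring

lemma U_zero (r : ℝ) : U r 0 = 0 := by simp [U, sX]

lemma U_pi_div_two (r : ℝ) : U r (π / 2) = 8 / π * ∑' n : ℕ, r ^ ex n * (1 / (mu n ^ 2 - 1)) := by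
  have := U_reflect r 0
  rw [sub_zero] at this
  simp [this, sY]

/-- All terms of `U r (π/2)` are positive, so its partial sums bound it from below. -/
lemma partial_le_U {r : ℝ} (h0 : 0 ≤ r) (h1 : r < 1) (N : ℕ) :
    8 / π * ∑ n ∈ Finset.range N, r ^ ex n * (1 / (mu n ^ 2 - 1)) ≤ U r (π / 2) := by
  rw [U_pi_div_two]
  refine mul_le_mul_of_nonneg_left (Summable.sum_le_tsum _ (fun n _ => ?_) ?_) (by positivity)
  · have := mu_sq_pos n; positivity
  · simpa using summable_sY h0 h1 0

lemma U_pi_div_two_pos {r : ℝ} (h0 : 0 < r) (h1 : r < 1) : 0 < U r (π / 2) := by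
  refine lt_of_lt_of_le ?_ (partial_le_U h0.le h1 1)
  have := mu_sq_pos 0
  simp only [Finset.sum_range_one]; positivity

/-- At `θ = π/4` every `cos(mθ)` vanishes and `sin(mθ) = (-1)ⁿ`. -/
lemma U_quarter (r : ℝ) : U r (π / 4) = 4 * √2 / π * sV r := by
  have hX : sX r (π / 4) = sV r := by
    simp only [sX, sV, mu_quarter, sin_add_pi_div_two, cos_nat_mul_pi]
    congr 1; funext n; ring
  have hY : sY r (π / 4) = 0 := by
    simp [sY, mu_quarter, cos_add_pi_div_two]
  rw [U, hX, hY, cos_pi_div_four]; ring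

lemma pow16 {r : ℝ} (h0 : 0 < r) (h1 : r < 1) : 0 < r ^ 16 ∧ r ^ 16 < 1 :=
  ⟨by positivity, pow_lt_one₀ h0.le h1 (by norm_num)⟩

lemma U_strictMonoOn {r : ℝ} (h0 : 0 < r) (h1 : r < 1) : StrictMonoOn (U r) (Icc 0 (π / 4)) := by
  have hU := hasDerivAt_U h0.le h1
  refine strictMonoOn_of_deriv_pos (convex_Icc _ _)
    (fun x _ => (hU x).continuousAt.continuousWithinAt) fun x hx => ?_
  rw [interior_Icc] at hx
  obtain ⟨L, hL, hT⟩ := Th_lower (pow16 h0 h1).1 (pow16 h0 h1).2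
  have hc : 0 < cos (2 * x) := cos_pos_of_mem_Ioo ⟨by linarith [hx.1, pi_pos], by linarith [hx.2]⟩
  have hc' : 0 < cos x :=
    cos_pos_of_mem_Ioo ⟨by linarith [hx.1, pi_pos], by linarith [hx.2, pi_pos]⟩
  have hp : 0 < Th (r ^ 16) (2 * x) := (mul_pos hL hc).trans_le (hT _ hc.le)
  rw [(hU x).deriv]
  positivity

lemma U_strictAntiOn {r : ℝ} (h0 : 0 < r) (h1 : r < 1) :
    StrictAntiOn (U r) (Icc (π / 4) (π / 2)) := by
  have hU := hasDerivAt_U h0.le h1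
  refine strictAntiOn_of_deriv_neg (convex_Icc _ _)
    (fun x _ => (hU x).continuousAt.continuousWithinAt) fun x hx => ?_
  rw [interior_Icc] at hx
  obtain ⟨L, hL, hT⟩ := Th_lower (pow16 h0 h1).1 (pow16 h0 h1).2
  have hc : 0 < cos (π - 2 * x) :=
    cos_pos_of_mem_Ioo ⟨by linarith [hx.2, pi_pos], by linarith [hx.1]⟩
  have hc' : 0 < cos x :=
    cos_pos_of_mem_Ioo ⟨by linarith [hx.1, pi_pos], by linarith [hx.2, pi_pos]⟩
  have hp : 0 < Th (r ^ 16) (π - 2 * x) := (mul_pos hL hc).trans_le (hT _ hc.le)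
  rw [Th_pi_sub] at hp
  rw [(hU x).deriv]
  have : 0 < 8 / π * (cos x * (r ^ 3 * -Th (r ^ 16) (2 * x))) := by positivity
  linarith

lemma U_pos {r θ : ℝ} (h0 : 0 < r) (h1 : r < 1) (hθ : 0 < θ) (hθ' : θ ≤ π / 2) : 0 < U r θ := by
  have hpi := pi_pos
  rcases le_total θ (π / 4) with h | h
  · rw [← U_zero r]
    exact U_strictMonoOn h0 h1 ⟨le_rfl, by positivity⟩ ⟨hθ.le, h⟩ hθ
  · exact (U_pi_div_two_pos h0 h1).trans_le
      ((U_strictAntiOn h0 h1).antitoneOn ⟨h, hθ'⟩ ⟨by linarith, le_rfl⟩ hθ')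

lemma U_le_quarter {r θ : ℝ} (h0 : 0 < r) (h1 : r < 1) (hθ : 0 ≤ θ) (hle : θ ≤ π / 2) :
    U r θ ≤ U r (π / 4) := by
  have hpi := pi_pos
  rcases le_total θ (π / 4) with h | h
  · exact (U_strictMonoOn h0 h1).monotoneOn ⟨hθ, h⟩ ⟨by positivity, le_rfl⟩ h
  · exact (U_strictAntiOn h0 h1).antitoneOn ⟨le_rfl, by linarith⟩ ⟨h, hle⟩ h

/-- The derivative `∂U/∂θ` is at most `(8/π) r (1 - r)⁻¹`, and `U(r, 0) = 0`. -/
lemma U_le_linear {r θ : ℝ} (h0 : 0 < r) (h1 : r < 1) (hθ : 0 ≤ θ) (hθ' : θ ≤ π / 2) :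
    U r θ ≤ 8 / π * (r * (1 - r)⁻¹) * θ := by
  have hU := hasDerivAt_U h0.le h1
  have := Convex.image_sub_le_mul_sub_of_deriv_le (convex_Icc 0 (π / 2)) (f := U r)
    (fun x _ => (hU x).continuousAt.continuousWithinAt)
    (fun x _ => (hU x).differentiableAt.differentiableWithinAt)
    (C := 8 / π * (r * (1 - r)⁻¹)) (fun x hx => ?_) 0 ⟨le_rfl, by positivity⟩ θ ⟨hθ, hθ'⟩ hθ
  · simpa [U_zero] using this
  · rw [interior_Icc] at hx
    have hc : 0 ≤ cos x := cos_nonneg_of_mem_Icc ⟨by linarith [hx.1, pi_pos], hx.2.le⟩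
    rw [(hU x).deriv]
    have hr : 0 < 1 - r := by linarith
    have hT := Th_le (pow16 h0 h1).1 (pow16 h0 h1).2 (2 * x)
    have h16 : r ^ 16 ≤ r := pow_le_of_le_one h0.le h1.le (by norm_num)
    have h3 : r ^ 3 ≤ r := pow_le_of_le_one h0.le h1.le (by norm_num)
    have hT' : Th (r ^ 16) (2 * x) ≤ (1 - r)⁻¹ :=
      hT.trans (inv_anti₀ hr (by linarith))
    refine mul_le_mul_of_nonneg_left ?_ (by positivity)
    calc cos x * (r ^ 3 * Th (r ^ 16) (2 * x)) ≤ cos x * (r ^ 3 * (1 - r)⁻¹) := by gcongr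
      _ ≤ r ^ 3 * (1 - r)⁻¹ := mul_le_of_le_one_left (by positivity) (cos_le_one x)
      _ ≤ _ := by gcongr

/-- The sum is `-∂Θ/∂z` at `z = π/2`. It is positive because `Θ(q, z) ≥ L cos z` to the left of
`π/2`, with equality at `π/2`, where `cos` has slope `-1`. -/
lemma Th_deriv_pos {q : ℝ} (h0 : 0 < q) (h1 : q < 1) :
    0 < ∑' n : ℕ, (-1) ^ n * (q ^ (n * (n + 1)) * (2 * n + 1)) := by
  obtain ⟨L, hL, hT⟩ := Th_lower h0 h1
  have hd : HasDerivAt (Th q)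
      (∑' n : ℕ, q ^ (n * (n + 1)) * (-((2 * n + 1) * sin ((2 * n + 1) * (π / 2))))) (π / 2) := by
    have hg : ∀ (n : ℕ) (y : ℝ), HasDerivAt (fun y => q ^ (n * (n + 1)) * cos ((2 * n + 1) * y))
        (q ^ (n * (n + 1)) * (-((2 * n + 1) * sin ((2 * n + 1) * y)))) y := fun n y => by
      have h := ((hasDerivAt_id' y).const_mul (2 * (n : ℝ) + 1)).cos.const_mul (q ^ (n * (n + 1)))
      exact h.congr_deriv (by ring)
    refine hasDerivAt_tsum (summable_mu h0.le h1) hg (fun n y => ?_) (summable_Th h0 h1 0) (π / 2)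
    · refine term_bound (abs_of_pos h0).le h1 (Nat.le_mul_of_pos_right n n.succ_pos) ?_
      rw [abs_neg, abs_mul, abs_of_nonneg (by positivity)]
      refine (mul_le_of_le_one_right (by positivity) (abs_sin_le_one _)).trans ?_
      unfold mu; have : (0 : ℝ) ≤ n := n.cast_nonneg; linarith
  have he : (∑' n : ℕ, q ^ (n * (n + 1)) * (-((2 * n + 1) * sin ((2 * n + 1) * (π / 2))))) =
      -∑' n : ℕ, (-1) ^ n * (q ^ (n * (n + 1)) * (2 * n + 1)) := by
    rw [← tsum_neg]
    congr 1; funext n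
    rw [show (2 * (n : ℝ) + 1) * (π / 2) = n * π + π / 2 by ring, sin_add_pi_div_two,
      cos_nat_mul_pi]
    ring
  rw [he] at hd
  have hg := hd.sub ((hasDerivAt_cos (π / 2)).const_mul L)
  have hz : Th q (π / 2) = 0 := by
    have := Th_pi_sub q (π / 2)
    rw [show π - π / 2 = π / 2 by ring] at this
    linarith
  -- `Θ - L cos` is nonnegative left of its zero `π/2`, so its slopes from the left are nonpositive.
  have hs := (hasDerivWithinAt_iff_tendsto_slope' (s := Iio (π / 2)) (by simp)).1
    hg.hasDerivWithinAt
  have hle := le_of_tendsto hs (b := 0) (by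
    filter_upwards [Ioo_mem_nhdsLT (show (0 : ℝ) < π / 2 by positivity)] with y hy
    have hc : 0 ≤ cos y := cos_nonneg_of_mem_Icc ⟨by linarith [hy.1, pi_pos], hy.2.le⟩
    simp only [slope_def_field, Pi.sub_apply, hz, cos_pi_div_two, mul_zero, sub_zero]
    exact div_nonpos_of_nonneg_of_nonpos (sub_nonneg.2 (hT y hc)) (by linarith [hy.2]))
  rw [sin_pi_div_two] at hle
  linarith

lemma abs_neg_one_pow_mul (n : ℕ) (a : ℝ) : ‖(-1) ^ n * a‖ = ‖a‖ := by
  rw [norm_mul, norm_pow]; simp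

lemma V_coeff (n : ℕ) : |mu n / (mu n ^ 2 - 1)| ≤ 1 := by
  simpa using abs_sin_coeff n (π / 2)

lemma summable_V {r : ℝ} (h0 : 0 ≤ r) (h1 : r < 1) :
    Summable fun n : ℕ => r ^ ex n * (mu n / (mu n ^ 2 - 1)) :=
  .of_norm_bounded (summable_mu h0 h1) fun n => term_bound (abs_of_nonneg h0).le h1
    (by have := le_ex n; omega) ((V_coeff n).trans (by linarith [two_le_mu n]))

/-- Each factor `m² - 1` in a denominator cancels against the exponent. -/
lemma hasDerivAt_sV {r : ℝ} (h0 : 0 < r) (h1 : r < 1) :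
    HasDerivAt sV (∑' n : ℕ, (-1) ^ n * (r ^ (ex n - 1) * mu n)) r := by
  -- The derivatives are dominated uniformly only on a smaller interval `|y| < R < 1`.
  obtain ⟨R, hrR, hR1⟩ := exists_between h1
  have hR0 : 0 < R := h0.trans hrR
  have hg : ∀ (n : ℕ) (y : ℝ), y ∈ Ioo (-R) R →
      HasDerivAt (fun y : ℝ => (-1) ^ n * (y ^ ex n * (mu n / (mu n ^ 2 - 1))))
        ((-1) ^ n * (y ^ (ex n - 1) * mu n)) y := fun n y _ => by
    have h := (((hasDerivAt_pow (ex n) y).mul_const (mu n / (mu n ^ 2 - 1)))).const_mul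
      ((-1 : ℝ) ^ n)
    refine h.congr_deriv ?_
    rw [cast_ex]
    have := (mu_sq_pos n).ne'
    field_simp
  have h0R : (0 : ℝ) ∈ Ioo (-R) R := ⟨by linarith, hR0⟩
  refine hasDerivAt_tsum_of_isPreconnected (summable_mu hR0.le hR1) isOpen_Ioo
    isPreconnected_Ioo hg (fun n y hy => ?_) h0R ?_ ⟨by linarith, hrR⟩
  · rw [abs_neg_one_pow_mul]
    exact term_bound (abs_lt.2 hy).le hR1 (by have := le_ex n; omega)
      (abs_of_pos (by linarith [two_le_mu n])).le
  · exact .of_norm (by simpa only [abs_neg_one_pow_mul] using (summable_V le_rfl one_pos).norm)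

lemma sV_strictMonoOn : StrictMonoOn sV (Ioo 0 1) := by
  refine strictMonoOn_of_deriv_pos (convex_Ioo _ _)
    (fun x hx => (hasDerivAt_sV hx.1 hx.2).continuousAt.continuousWithinAt) fun x hx => ?_
  rw [interior_Ioo] at hx
  rw [(hasDerivAt_sV hx.1 hx.2).deriv]
  have h := Th_deriv_pos (pow16 hx.1 hx.2).1 (pow16 hx.1 hx.2).2
  have he : (∑' n : ℕ, (-1) ^ n * (x ^ (ex n - 1) * mu n)) =
      2 * x ^ 2 * ∑' n : ℕ, (-1) ^ n * ((x ^ 16) ^ (n * (n + 1)) * (2 * n + 1)) := by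
    rw [← tsum_mul_left]
    congr 1; funext n
    rw [show ex n - 1 = 2 + 16 * (n * (n + 1)) by
      rw [show ex n = 2 + 16 * (n * (n + 1)) + 1 by unfold ex; ring]; simp, pow_add, pow_mul, mu]
    ring
  have := hx.1
  rw [he]; positivity

/-- Partial sums of odd length overestimate an alternating series with decreasing terms. -/
lemma sV_le_partial {r : ℝ} (h0 : 0 < r) (h1 : r < 1) (K : ℕ) : sV r ≤
    ∑ n ∈ Finset.range (2 * K + 1), (-1) ^ n * (r ^ ex n * (mu n / (mu n ^ 2 - 1))) := by
  refine Antitone.tendsto_le_alternating_series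
    (summable_V h0.le h1).tendsto_alternating_series_tsum (antitone_nat_of_succ_le fun n => ?_) K
  have h2 := two_le_mu n
  have e : mu (n + 1) = mu n + 4 := by unfold mu; push_cast; ring
  have hp := mu_sq_pos n
  have hp' := mu_sq_pos (n + 1)
  have hpow : r ^ ex (n + 1) ≤ r ^ ex n := pow_ex_le h0.le h1.le (by unfold ex; nlinarith)
  have hq : mu (n + 1) / (mu (n + 1) ^ 2 - 1) ≤ mu n / (mu n ^ 2 - 1) := by
    rw [div_le_div_iff₀ hp' hp, e]
    nlinarith
  have : 0 ≤ mu (n + 1) / (mu (n + 1) ^ 2 - 1) :=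
    div_nonneg (by linarith [two_le_mu (n + 1)]) hp'.le
  gcongr

/-- Partial sums of `1 + 1/3 - 1/5 - 1/7 + … = ∫₀¹ (1 + x²) / (1 + x⁴) dx = π / (2√2)` exceed the
limit by at most `2 / (4N + 1)`. -/
lemma arctan_partial (N : ℕ) :
    ∑ n ∈ Finset.range N, (-1 : ℝ) ^ n * (1 / (4 * n + 1) + 1 / (4 * n + 3)) ≤
      π / (2 * √2) + 2 / (4 * N + 1) := by
  set s := √2 with hs
  have hs2 : s ^ 2 = 2 := by rw [hs]; norm_num
  have hs0 : 0 < s := by positivity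
  -- `E` integrates, from `0` to `x`, the remainder of the geometric sum plus `2 x^(4N)`. The
  -- arctangents form a primitive of `(1 + x²) / (1 + x⁴)`, and the remainder is at most
  -- `2 x^(4N)` in absolute value on `[0, 1]`, so `E` increases from `E 0 = 0`.
  let E : ℝ → ℝ := fun x => (arctan (s * x + 1) + arctan (s * x - 1)) / s +
    2 * x ^ (4 * N + 1) / (4 * N + 1) - ∑ n ∈ Finset.range N,
      (-1 : ℝ) ^ n * (x ^ (4 * n + 1) / (4 * n + 1) + x ^ (4 * n + 3) / (4 * n + 3))
  have hpow : ∀ (x : ℝ) (k : ℕ), HasDerivAt (fun x : ℝ => x ^ (k + 1) / (k + 1)) (x ^ k) x := by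
    intro x k
    convert! (hasDerivAt_pow (k + 1) x).div_const ((k : ℝ) + 1) using 1
    push_cast
    field_simp
  have hsum : ∀ x : ℝ, ∑ n ∈ Finset.range N, (-1 : ℝ) ^ n * (x ^ (4 * n) + x ^ (4 * n + 2)) =
      (1 + x ^ 2) * (1 - (-x ^ 4) ^ N) / (1 + x ^ 4) := by
    intro x
    have h4 : 0 < 1 + x ^ 4 := by positivity
    rw [eq_div_iff h4.ne']
    induction N with
    | zero => simp
    | succ N ih =>
      rw [Finset.sum_range_succ, add_mul, ih, pow_succ (-x ^ 4), neg_pow (x ^ 4) N]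
      ring
  have hE : ∀ x, HasDerivAt E (2 * x ^ (4 * N) + (1 + x ^ 2) * (-x ^ 4) ^ N / (1 + x ^ 4)) x := by
    intro x
    have h1 := (((hasDerivAt_id x).const_mul s).add_const 1).arctan
    have h2 := (((hasDerivAt_id x).const_mul s).sub_const 1).arctan
    have h3 := (hpow x (4 * N)).const_mul 2
    have h4 : HasDerivAt (fun x : ℝ => ∑ n ∈ Finset.range N,
      (-1 : ℝ) ^ n * (x ^ (4 * n + 1) / (4 * n + 1) + x ^ (4 * n + 3) / (4 * n + 3)))
      (∑ n ∈ Finset.range N, (-1 : ℝ) ^ n * (x ^ (4 * n) + x ^ (4 * n + 2))) x := by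
      refine HasDerivAt.fun_sum fun n _ => ?_
      have a := hpow x (4 * n)
      have b := hpow x (4 * n + 2)
      push_cast at a b
      convert! (a.add b).const_mul ((-1 : ℝ) ^ n) using 1
      funext y
      simp only [Pi.add_apply]
      ring
    have h := (((h1.add h2).div_const s).add h3).sub h4
    convert! h using 1
    · funext y
      simp only [E, Pi.sub_apply, Pi.add_apply, id]
      push_cast; ring
    · rw [hsum]
      have p4 : 0 < 1 + x ^ 4 := by positivity
      have p1 : 0 < 1 + (s * x + 1) ^ 2 := by positivity
      have p2 : 0 < 1 + (s * x - 1) ^ 2 := by positivity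
      have key : (1 / (1 + (s * x + 1) ^ 2) * (s * 1) + 1 / (1 + (s * x - 1) ^ 2) * (s * 1)) / s =
          (1 + x ^ 2) / (1 + x ^ 4) := by
        have e1 : (1 + (s * x + 1) ^ 2) * (1 + (s * x - 1) ^ 2) = 4 * (1 + x ^ 4) := by
          linear_combination (s ^ 2 * x ^ 4 + 2 * x ^ 4) * hs2
        have e2 : (1 + (s * x + 1) ^ 2) + (1 + (s * x - 1) ^ 2) = 4 * (1 + x ^ 2) := by
          linear_combination 2 * x ^ 2 * hs2
        have : (1 / (1 + (s * x + 1) ^ 2) * (s * 1) + 1 / (1 + (s * x - 1) ^ 2) * (s * 1)) / s =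
          ((1 + (s * x + 1) ^ 2) + (1 + (s * x - 1) ^ 2)) /
            ((1 + (s * x + 1) ^ 2) * (1 + (s * x - 1) ^ 2)) := by
          field_simp; ring
        rw [this, e1, e2]
        field_simp
      simp only [id]
      rw [key]
      field_simp
      ring
  have hmono : MonotoneOn E (Icc 0 1) := by
    refine monotoneOn_of_deriv_nonneg (convex_Icc _ _)
      (fun x _ => (hE x).continuousAt.continuousWithinAt)
      (fun x _ => (hE x).differentiableAt.differentiableWithinAt) fun x hx => ?_
    rw [interior_Icc] at hx
    rw [(hE x).deriv]
    have p4 : 0 < 1 + x ^ 4 := by positivity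
    have hp : (0 : ℝ) ≤ x ^ (4 * N) := by have := hx.1; positivity
    have hlow : -x ^ (4 * N) ≤ (-x ^ 4) ^ N := by
      rw [neg_pow, ← pow_mul]
      rcases neg_one_pow_eq_or ℝ N with h | h <;> rw [h] <;> linarith
    have hx2 : x ^ 2 ≤ 1 := pow_le_one₀ hx.1.le hx.2.le
    have : -(2 * x ^ (4 * N)) ≤ (1 + x ^ 2) * (-x ^ 4) ^ N / (1 + x ^ 4) := by
      rw [le_div_iff₀ p4]
      have h4 : 0 ≤ x ^ 4 := by positivity
      have h2 : 0 ≤ x ^ 2 := by positivity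
      nlinarith [mul_le_mul_of_nonneg_left hlow (by positivity : 0 ≤ 1 + x ^ 2),
        mul_nonneg hp h4, mul_nonneg hp (sub_nonneg.2 hx2)]
    linarith
  have h01 := hmono (left_mem_Icc.2 zero_le_one) (right_mem_Icc.2 zero_le_one) zero_le_one
  have hE0 : E 0 = 0 := by simp [E, arctan_neg]
  -- `(√2 - 1)(√2 + 1) = 1`, so the two angles are complementary.
  have harc : arctan (s - 1) = π / 2 - arctan (s + 1) := by
    rw [← arctan_inv_of_pos (by positivity)]
    congr 1
    refine eq_inv_of_mul_eq_one_left ?_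
    linear_combination hs2
  have hE1 : E 1 = π / (2 * s) + 2 / (4 * N + 1) - ∑ n ∈ Finset.range N,
      (-1 : ℝ) ^ n * (1 / (4 * n + 1) + 1 / (4 * n + 3)) := by
    simp only [E, mul_one, one_pow, harc]
    ring
  rw [hE0, hE1] at h01
  linarith

/-- `V(r) < V(r₁)` for any `r₁` between `r` and `1`, and monotonicity bounds `V(r₁)` by the partial
sums at `1`, which avoids summing the series at `r = 1` itself. -/
lemma sV_lt {r : ℝ} (h0 : 0 < r) (h1 : r < 1) : sV r < π / (4 * √2) := by
  obtain ⟨r₁, hr, hr1⟩ := exists_between h1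
  refine (sV_strictMonoOn ⟨h0, h1⟩ ⟨h0.trans hr, hr1⟩ hr).trans_le ?_
  have hK : ∀ K : ℕ, sV r₁ ≤ π / (4 * √2) + 1 / (4 * (2 * K + 1 : ℕ) + 1) := by
    intro K
    let S : ℝ → ℝ := fun x =>
      ∑ n ∈ Finset.range (2 * K + 1), (-1) ^ n * (x ^ ex n * (mu n / (mu n ^ 2 - 1)))
    have hc : Continuous S := by fun_prop
    -- A partial sum is continuous in `r`, so the bound `V(r₁) ≤ V(y) ≤ S(y)` passes to `y → 1`.
    have hS : sV r₁ ≤ S 1 := by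
      refine ge_of_tendsto (hc.continuousWithinAt (s := Iio 1) (x := 1)) ?_
      filter_upwards [Ioo_mem_nhdsLT hr1] with y hy
      exact (sV_strictMonoOn ⟨h0.trans hr, hr1⟩ ⟨(h0.trans hr).trans hy.1, hy.2⟩ hy.1).le.trans
        (sV_le_partial ((h0.trans hr).trans hy.1) hy.2 K)
    have e : S 1 = (∑ n ∈ Finset.range (2 * K + 1),
        (-1 : ℝ) ^ n * (1 / (4 * n + 1) + 1 / (4 * n + 3))) / 2 := by
      rw [Finset.sum_div]
      refine Finset.sum_congr rfl fun n _ => ?_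
      rw [show mu n ^ 2 - 1 = (4 * n + 1) * (4 * n + 3) by unfold mu; ring, mu]
      field_simp
      ring
    have := arctan_partial (2 * K + 1)
    calc sV r₁ ≤ S 1 := hS
      _ ≤ (π / (2 * √2) + 2 / (4 * (2 * K + 1 : ℕ) + 1)) / 2 := by rw [e]; gcongr
      _ = _ := by field_simp; ring
  have ht : Tendsto (fun K : ℕ => π / (4 * √2) + 1 / (4 * ((2 * K + 1 : ℕ) : ℝ) + 1)) atTop
      (𝓝 (π / (4 * √2) + 0)) := by
    refine tendsto_const_nhds.add (squeeze_zero (fun K => by positivity) (fun K => ?_)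
      tendsto_one_div_add_atTop_nhds_zero_nat)
    gcongr
    push_cast
    have : (0 : ℝ) ≤ K := K.cast_nonneg
    linarith
  rw [add_zero] at ht
  exact ge_of_tendsto' ht hK

lemma U_lt_one {r θ : ℝ} (h0 : 0 < r) (h1 : r < 1) (hθ : 0 ≤ θ) (hθ' : θ ≤ π / 2) :
    U r θ < 1 := by
  refine (U_le_quarter h0 h1 hθ hθ').trans_lt ?_
  rw [U_quarter]
  calc 4 * √2 / π * sV r < 4 * √2 / π * (π / (4 * √2)) := by gcongr; exact sV_lt h0 h1
    _ = 1 := by field_simp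

/-! ### The gradient map and its boundary behaviour -/

/-- `W` is differentiable as a function of both variables, with partial derivatives `(8/π) sX` and
`(8/π) r sY`. -/
lemma hasFDerivAt_W {r : ℝ} (h0 : 0 < r) (h1 : r < 1) (θ : ℝ) :
    HasFDerivAt (fun x : ℝ × ℝ => W x.1 x.2)
      ((8 / π) • (sX r θ • ContinuousLinearMap.fst ℝ ℝ ℝ +
        (r * sY r θ) • ContinuousLinearMap.snd ℝ ℝ ℝ)) (r, θ) := by
  obtain ⟨R, hrR, hR1⟩ := exists_between h1
  have hR0 : 0 < R := h0.trans hrR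
  let f : ℕ → ℝ × ℝ → ℝ := fun n x =>
    x.1 ^ (mIdx n ^ 2) * sin ((mIdx n : ℝ) * x.2) / (((mIdx n : ℝ) ^ 2 - 1) * (mIdx n : ℝ))
  let a : ℕ → ℝ × ℝ → ℝ := fun n x => x.1 ^ ex n * (mu n * sin (mu n * x.2) / (mu n ^ 2 - 1))
  let b : ℕ → ℝ × ℝ → ℝ := fun n x => x.1 ^ (ex n + 1) * (cos (mu n * x.2) / (mu n ^ 2 - 1))
  let f' : ℕ → ℝ × ℝ → (ℝ × ℝ →L[ℝ] ℝ) := fun n x =>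
    a n x • ContinuousLinearMap.fst ℝ ℝ ℝ + b n x • ContinuousLinearMap.snd ℝ ℝ ℝ
  -- On `|r| < R < 1`, with `θ` arbitrary, the differentiated series is dominated uniformly.
  let t : Set (ℝ × ℝ) := Ioo (-R) R ×ˢ univ
  have ht : IsOpen t := isOpen_Ioo.prod isOpen_univ
  have htc : IsPreconnected t := isPreconnected_Ioo.prod isPreconnected_univ
  have hf : ∀ n x, x ∈ t → HasFDerivAt (f n) (f' n x) x := by
    intro n x _
    have hd : f n = fun x : ℝ × ℝ =>
        x.1 ^ (ex n + 1) * sin (mu n * x.2) * ((mu n ^ 2 - 1) * mu n)⁻¹ := by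
      funext y
      simp only [f, mIdx_sq, cast_mIdx, div_eq_mul_inv]
    have hfst : HasFDerivAt (fun x : ℝ × ℝ => x.1) (ContinuousLinearMap.fst ℝ ℝ ℝ) x :=
      hasFDerivAt_fst
    have hsnd : HasFDerivAt (fun x : ℝ × ℝ => x.2) (ContinuousLinearMap.snd ℝ ℝ ℝ) x :=
      hasFDerivAt_snd
    have h := (((hasDerivAt_pow (ex n + 1) x.1).comp_hasFDerivAt x hfst).mul
      ((hsnd.const_mul (mu n)).sin)).mul_const ((mu n ^ 2 - 1) * mu n)⁻¹
    rw [hd]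
    refine h.congr_fderiv ?_
    have h2 := (mu_sq_pos n).ne'
    have h3 : mu n ≠ 0 := by linarith [two_le_mu n]
    ext
    · simp [f', a, cast_ex]
      field_simp
    · simp [f', b]
      field_simp
  have hbd : ∀ n x, x ∈ t → ‖a n x‖ ≤ R ^ n * mu n ∧ ‖b n x‖ ≤ R ^ n * mu n := by
    intro n x hx
    have hx1 : |x.1| ≤ R := (abs_lt.2 hx.1).le
    have := le_ex n
    have := two_le_mu n
    exact ⟨term_bound hx1 hR1 (by omega) ((abs_sin_coeff n _).trans (by linarith)),
      term_bound hx1 hR1 (by omega) ((abs_cos_coeff n _).trans (by linarith))⟩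
  have hu : Summable fun n : ℕ => R ^ n * mu n + R ^ n * mu n :=
    (summable_mu hR0.le hR1).add (summable_mu hR0.le hR1)
  have hf' : ∀ n x, x ∈ t → ‖f' n x‖ ≤ R ^ n * mu n + R ^ n * mu n := by
    intro n x hx
    obtain ⟨ha, hb⟩ := hbd n x hx
    refine (norm_add_le _ _).trans (add_le_add ?_ ?_)
    · rw [norm_smul]
      exact (mul_le_of_le_one_right (norm_nonneg _) (ContinuousLinearMap.norm_fst_le ..)).trans ha
    · rw [norm_smul]
      exact (mul_le_of_le_one_right (norm_nonneg _) (ContinuousLinearMap.norm_snd_le ..)).trans hb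
  have hx0 : ((0, 0) : ℝ × ℝ) ∈ t := ⟨⟨by simpa using hR0, hR0⟩, mem_univ _⟩
  have hx : ((r, θ) : ℝ × ℝ) ∈ t := ⟨⟨by simp only; linarith, hrR⟩, mem_univ _⟩
  have hs0 : Summable fun n => f n (0, 0) := by
    have : (fun n => f n (0, 0)) = fun _ => 0 := by funext n; simp [f]
    rw [this]; exact summable_zero
  have h := (hasFDerivAt_tsum_of_isPreconnected hu ht htc hf hf' hx0 hs0 hx).const_mul (8 / π)
  refine HasFDerivAt.congr_fderiv h ?_
  congr 1
  have hA : HasSum (fun n => a n (r, θ)) (sX r θ) := (summable_sX h0.le h1 θ).hasSum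
  have hB : HasSum (fun n => b n (r, θ)) (r * sY r θ) := by
    refine ((summable_sY h0.le h1 θ).hasSum.mul_left r).congr_fun ?_
    intro n
    simp only [b]; ring
  exact ((hA.smul_const _).add (hB.smul_const _)).tsum_eq

/-- The polar coordinates `r = √(p² + q²)`, `θ = arctan (q/p)` of a point of the open sector:
their range, and the inversion formulas `r cos θ = p`, `r sin θ = q`. -/
lemma polar {p q : ℝ} (hp : 0 < p) (hq : 0 < q) (h : p ^ 2 + q ^ 2 < 1) :
    0 < √(p ^ 2 + q ^ 2) ∧ √(p ^ 2 + q ^ 2) < 1 ∧ 0 < arctan (q / p) ∧ arctan (q / p) < π / 2 ∧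
      √(p ^ 2 + q ^ 2) * cos (arctan (q / p)) = p ∧
      √(p ^ 2 + q ^ 2) * sin (arctan (q / p)) = q := by
  have h0 : 0 < √(p ^ 2 + q ^ 2) := by positivity
  have e : √(1 + (q / p) ^ 2) = √(p ^ 2 + q ^ 2) / p := by
    rw [show 1 + (q / p) ^ 2 = (p ^ 2 + q ^ 2) / p ^ 2 by field_simp, sqrt_div' _ (by positivity),
      sqrt_sq hp.le]
  refine ⟨h0, (sqrt_lt' one_pos).2 (by simpa using h), arctan_pos.2 (by positivity),
    arctan_lt_pi_div_two _, ?_, ?_⟩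
  · rw [cos_arctan, e]; field_simp
  · rw [sin_arctan, e]; field_simp

lemma wp_eq_s9 {p q : ℝ} (hp : 0 < p) (hq : 0 < q) (h : p ^ 2 + q ^ 2 < 1) :
    wp p q = U (√(p ^ 2 + q ^ 2)) (arctan (q / p)) := by
  obtain ⟨h0, h1, -, -, hc, hs⟩ := polar hp hq h
  have hsq : √(p ^ 2 + q ^ 2) ^ 2 = p ^ 2 + q ^ 2 := sq_sqrt (by positivity)
  set r := √(p ^ 2 + q ^ 2) with hr
  set θ := arctan (q / p) with hθ
  have d1 : HasDerivAt (fun s : ℝ => √(s ^ 2 + q ^ 2)) (cos θ) p := by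
    refine (((hasDerivAt_pow 2 p).add_const (q ^ 2)).sqrt (by positivity)).congr_deriv ?_
    rw [← hr, div_eq_iff (by positivity)]
    push_cast
    linear_combination (-2) * hc
  have d2 : HasDerivAt (fun s : ℝ => arctan (q / s)) (-(sin θ / r)) p := by
    refine (((hasDerivAt_const p q).div (hasDerivAt_id' p) hp.ne').arctan).congr_deriv ?_
    have hsin : sin θ = q / r := by rw [← hs]; field_simp
    rw [hsin, show q / r / r = q / (p ^ 2 + q ^ 2) by rw [← hsq]; field_simp]
    simp only [Pi.div_apply]
    field_simp
    ring
  have hd := (hasFDerivAt_W h0 h1 θ).comp_hasDerivAt p (d1.prodMk d2)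
  have hw : HasDerivAt (fun s => w s q) _ p := hd
  rw [wp, hw.deriv, U]
  simp
  field_simp
  ring

lemma wq_eq_s9 {p q : ℝ} (hp : 0 < p) (hq : 0 < q) (h : p ^ 2 + q ^ 2 < 1) :
    wq p q = U (√(p ^ 2 + q ^ 2)) (π / 2 - arctan (q / p)) := by
  obtain ⟨h0, h1, -, -, hc, hs⟩ := polar hp hq h
  have hsq : √(p ^ 2 + q ^ 2) ^ 2 = p ^ 2 + q ^ 2 := sq_sqrt (by positivity)
  set r := √(p ^ 2 + q ^ 2) with hr
  set θ := arctan (q / p) with hθ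
  have d1 : HasDerivAt (fun t : ℝ => √(p ^ 2 + t ^ 2)) (sin θ) q := by
    refine (((hasDerivAt_pow 2 q).const_add (p ^ 2)).sqrt (by positivity)).congr_deriv ?_
    rw [← hr, div_eq_iff (by positivity)]
    push_cast
    linear_combination (-2) * hs
  have d2 : HasDerivAt (fun t : ℝ => arctan (t / p)) (cos θ / r) q := by
    refine (((hasDerivAt_id' q).div_const p).arctan).congr_deriv ?_
    have hcos : cos θ = p / r := by
      rw [eq_div_iff h0.ne', mul_comm, hc]
    rw [hcos, show p / r / r = p / (p ^ 2 + q ^ 2) by rw [← hsq]; field_simp]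
    field_simp
  have hd := (hasFDerivAt_W h0 h1 θ).comp_hasDerivAt q (d1.prodMk d2)
  have hw : HasDerivAt (fun t => w p t) _ q := hd
  rw [wq, hw.deriv, U_reflect]
  simp
  field_simp

/-- `U_le_linear` combined with Jordan's inequality `(2/π) θ ≤ sin θ`. -/
lemma U_le_cartesian {r θ : ℝ} (h0 : 0 < r) (h1 : r < 1) (hθ : 0 ≤ θ) (hθ' : θ ≤ π / 2) :
    U r θ ≤ 4 * (1 - r)⁻¹ * (r * sin θ) := by
  have hr : 0 < 1 - r := by linarith
  calc U r θ ≤ 8 / π * (r * (1 - r)⁻¹) * θ := U_le_linear h0 h1 hθ hθ'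
    _ = 4 * (1 - r)⁻¹ * (r * (2 / π * θ)) := by ring
    _ ≤ _ := by gcongr; exact mul_le_sin hθ hθ'

lemma wp_le {p q : ℝ} (hp : 0 < p) (hq : 0 < q) (h : p ^ 2 + q ^ 2 < 1) :
    wp p q ≤ 4 * (1 - √(p ^ 2 + q ^ 2))⁻¹ * q := by
  obtain ⟨h0, h1, ha, hb, -, hs⟩ := polar hp hq h
  rw [wp_eq_s9 hp hq h]
  simpa only [hs] using U_le_cartesian h0 h1 ha.le hb.le

lemma wq_le {p q : ℝ} (hp : 0 < p) (hq : 0 < q) (h : p ^ 2 + q ^ 2 < 1) :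
    wq p q ≤ 4 * (1 - √(p ^ 2 + q ^ 2))⁻¹ * p := by
  obtain ⟨h0, h1, ha, hb, hc, -⟩ := polar hp hq h
  rw [wq_eq_s9 hp hq h]
  have := U_le_cartesian h0 h1 (sub_nonneg.2 hb.le) (sub_le_self _ ha.le)
  rwa [sin_pi_div_two_sub, hc] at this

/-- One of `θ`, `π/2 - θ` lies in `[π/4, π/2]`, where `U(r, ·)` is at least its value at `π/2`. -/
lemma partial_le_max {p q : ℝ} (hp : 0 < p) (hq : 0 < q) (h : p ^ 2 + q ^ 2 < 1) (N : ℕ) :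
    8 / π * ∑ n ∈ Finset.range N, √(p ^ 2 + q ^ 2) ^ ex n * (1 / (mu n ^ 2 - 1)) ≤
      max (wp p q) (wq p q) := by
  obtain ⟨h0, h1, ha, hb, -, -⟩ := polar hp hq h
  have hpi := pi_pos
  rw [wp_eq_s9 hp hq h, wq_eq_s9 hp hq h]
  refine (partial_le_U h0.le h1 N).trans ?_
  have key : ∀ φ, π / 4 ≤ φ → φ ≤ π / 2 →
      U (√(p ^ 2 + q ^ 2)) (π / 2) ≤ U (√(p ^ 2 + q ^ 2)) φ := fun φ h2 h3 =>
    (U_strictAntiOn h0 h1).antitoneOn ⟨h2, h3⟩ ⟨by linarith, le_rfl⟩ h3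
  rcases le_total (π / 4) (arctan (q / p)) with h2 | h2
  · exact (key _ h2 hb.le).trans (le_max_left _ _)
  · exact (key _ (by linarith) (by linarith)).trans (le_max_right _ _)

/-- `2 / (m² - 1) = 1/(4n+1) - 1/(4n+3)`, so this is the Leibniz series taken two terms at
a time. -/
lemma tendsto_partial_one : Tendsto (fun N : ℕ =>
    8 / π * ∑ n ∈ Finset.range N, (1 / (mu n ^ 2 - 1))) atTop (𝓝 1) := by
  have h := (tendsto_sum_pi_div_four.comp
    (tendsto_id.const_mul_atTop' (show 0 < 2 by norm_num))).const_mul (4 / π)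
  rw [show 4 / π * (π / 4) = 1 by field_simp] at h
  refine h.congr fun N => ?_
  simp only [Function.comp, id]
  have : ∑ i ∈ Finset.range (2 * N), (-1 : ℝ) ^ i / (2 * i + 1) =
      2 * ∑ n ∈ Finset.range N, (1 / (mu n ^ 2 - 1)) := by
    induction N with
    | zero => simp
    | succ N ih =>
      rw [show 2 * (N + 1) = 2 * N + 1 + 1 by ring, Finset.sum_range_succ, Finset.sum_range_succ,
        ih, Finset.sum_range_succ, mul_add, pow_succ, pow_mul,
        show mu N ^ 2 - 1 = (4 * N + 1) * (4 * N + 3) by unfold mu; ring]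
      push_cast
      have h3 : (2 * (2 * (N : ℝ)) + 1) ≠ 0 := by positivity
      have h4 : (2 * (2 * (N : ℝ) + 1) + 1) ≠ 0 := by positivity
      have h5 : (4 * (N : ℝ) + 1) ≠ 0 := by positivity
      have h6 : (4 * (N : ℝ) + 3) ≠ 0 := by positivity
      norm_num
      field_simp
      ring
  rw [this]; ring

lemma grad_mem {p : ℝ × ℝ} (hp : p ∈ B1) :
    (0 < wp p.1 p.2 ∧ wp p.1 p.2 < 1) ∧ (0 < wq p.1 p.2 ∧ wq p.1 p.2 < 1) := by
  obtain ⟨h1, h2, h3⟩ := hp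
  obtain ⟨hr0, hr1, ha, hb, -, -⟩ := polar h1 h2 h3
  rw [wp_eq_s9 h1 h2 h3, wq_eq_s9 h1 h2 h3]
  exact ⟨⟨U_pos hr0 hr1 ha hb.le, U_lt_one hr0 hr1 ha.le hb.le⟩,
    ⟨U_pos hr0 hr1 (by linarith) (by linarith), U_lt_one hr0 hr1 (by linarith) (by linarith)⟩⟩

/-- `∇wᵀ` maps `B₁` into `Ω₁ = (0,1)²`, and any limit of `∇wᵀ` along a sequence
in `B₁` converging to a boundary point of `B₁` lies on the boundary of `Ω₁`. -/
theorem stmt9 :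
    (∀ p ∈ B1, (0 < wp p.1 p.2 ∧ wp p.1 p.2 < 1) ∧ (0 < wq p.1 p.2 ∧ wq p.1 p.2 < 1)) ∧
    (∀ (pj : ℕ → ℝ × ℝ) (pstar xstar : ℝ × ℝ),
      (∀ j, pj j ∈ B1) → pstar ∈ frontier B1 →
      Tendsto pj atTop (𝓝 pstar) →
      Tendsto (fun j => gradw (pj j)) atTop (𝓝 xstar) →
      xstar ∈ frontier Ω1) := by
  refine ⟨fun p hp => grad_mem hp, fun pj pstar xstar hB hfr hlim hgrad => ?_⟩
  have hopen : IsOpen Ω1 := isOpen_Ioo.prod isOpen_Ioo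
  rw [hopen.frontier_eq]
  refine ⟨mem_closure_of_tendsto hgrad (Eventually.of_forall fun j => grad_mem (hB j)),
    fun hx => ?_⟩
  rw [isOpen_B1.frontier_eq] at hfr
  have l1 : Tendsto (fun j => (pj j).1) atTop (𝓝 pstar.1) := (continuous_fst.tendsto _).comp hlim
  have l2 : Tendsto (fun j => (pj j).2) atTop (𝓝 pstar.2) := (continuous_snd.tendsto _).comp hlim
  have g1 : Tendsto (fun j => wp (pj j).1 (pj j).2) atTop (𝓝 xstar.1) :=
    (continuous_fst.tendsto _).comp hgrad
  have g2 : Tendsto (fun j => wq (pj j).1 (pj j).2) atTop (𝓝 xstar.2) :=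
    (continuous_snd.tendsto _).comp hgrad
  have lr : Tendsto (fun j => √((pj j).1 ^ 2 + (pj j).2 ^ 2)) atTop
      (𝓝 (√(pstar.1 ^ 2 + pstar.2 ^ 2))) := ((l1.pow 2).add (l2.pow 2)).sqrt
  have n1 : 0 ≤ pstar.1 := ge_of_tendsto' l1 fun j => (hB j).1.le
  have n2 : 0 ≤ pstar.2 := ge_of_tendsto' l2 fun j => (hB j).2.1.le
  have n3 : pstar.1 ^ 2 + pstar.2 ^ 2 ≤ 1 :=
    le_of_tendsto' ((l1.pow 2).add (l2.pow 2)) fun j => (hB j).2.2.le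
  rcases n3.eq_or_lt with h3 | h3
  -- Limit on the arc: `max x*₁ x*₂` is at least each partial sum, hence at least `1`.
  · rw [h3, sqrt_one] at lr
    have hN : ∀ N : ℕ, 8 / π * ∑ n ∈ Finset.range N, (1 / (mu n ^ 2 - 1)) ≤
        max xstar.1 xstar.2 := by
      intro N
      have hc : Continuous fun r : ℝ =>
        8 / π * ∑ n ∈ Finset.range N, r ^ ex n * (1 / (mu n ^ 2 - 1)) := by fun_prop
      have := (hc.tendsto 1).comp lr
      simp only [one_pow, one_mul] at this
      exact le_of_tendsto_of_tendsto' this (g1.max g2)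
        fun j => partial_le_max (hB j).1 (hB j).2.1 (hB j).2.2 N
    exact absurd (le_of_tendsto' tendsto_partial_one hN) (not_le.2 (max_lt hx.1.2 hx.2.2))
  -- Limit strictly inside the disc: it must lie on an axis, where `w_p` or `w_q` tends to `0`.
  have hlt : √(pstar.1 ^ 2 + pstar.2 ^ 2) < 1 := (sqrt_lt' one_pos).2 (by simpa using h3)
  have lk : Tendsto (fun j => 4 * (1 - √((pj j).1 ^ 2 + (pj j).2 ^ 2))⁻¹) atTop
      (𝓝 (4 * (1 - √(pstar.1 ^ 2 + pstar.2 ^ 2))⁻¹)) :=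
    ((lr.const_sub 1).inv₀ (by linarith)).const_mul 4
  rcases n2.eq_or_lt with h2 | h2
  · have hle := le_of_tendsto_of_tendsto' g1 (lk.mul l2)
      fun j => wp_le (hB j).1 (hB j).2.1 (hB j).2.2
    rw [← h2, mul_zero] at hle
    exact absurd hx.1.1 (not_lt.2 hle)
  rcases n1.eq_or_lt with h1 | h1
  · have hle := le_of_tendsto_of_tendsto' g2 (lk.mul l1)
      fun j => wq_le (hB j).1 (hB j).2.1 (hB j).2.2
    rw [← h1, mul_zero] at hle
    exact absurd hx.2.1 (not_lt.2 hle)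
  exact hfr.2 ⟨h1, h2, h3⟩
end

section
/- The mixed second partial derivative of w is strictly positive on the open sector: w_{pq}(p,q) > 0 for all (p,q) ∈ B₁. Consequently, for each fixed q₀ with 0 < q₀ < 1, the function p ↦ w_q(p,q₀) is strictly increasing on (0, √(1−q₀²)). -/
/-!
Write `ρ = p² + q²`, `φ = 2θ` and `y = ρ⁸`. Termwise differentiation of the series cancels the
denominators `(m² - 1) m` and leaves
`w_pq = (8/π) ρ ∑ y^{n(n+1)} (cos φ cos ((2n+1)φ) + (2n+1) sin φ sin ((2n+1)φ))`,
that is, `(8/π) ρ (cos φ C - sin φ C')` for the theta function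
`C(φ) = ∑ y^{n(n+1)} cos ((2n+1)φ)`. By the Jacobi triple product, with `Q = y²`, `C` is a positive
multiple of `cos φ ∏ (1 + 2 Q^j cos 2φ + Q^{2j})`. If `G` denotes this product, then
`cos φ (cos φ G) - sin φ (cos φ G)' = G - sin φ cos φ G'`, and
`- sin φ cos φ G' / G = ∑ 2 Q^j sin² 2φ / (1 + 2 Q^j cos 2φ + Q^{2j}) ≥ 0`, so the expression is at
least `G > 0`.

The triple product is used through its finite form: `thetaSum_succ` multiplies the finite sums with
Gaussian binomial coefficients by one further factor, `theta_finite_bound` gives a lower bound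
`(Q; Q)_N²` for the finite expressions, and `theta_pos` lets `N → ∞` by dominated convergence.

For the monotonicity statement, `w p q = w q p` on the quadrant, because `sin (m (π/2 - θ)) = sin mθ`
for `m ≡ 2 mod 4`; hence `w_q(p, q) = w_p(q, p)`, whose derivative in `p` is `w_pq(q, p) > 0`.
-/

open Real Set Topology Filter

/-! ### Finite Jacobi triple products -/

/-- The finite `Q`-Pochhammer product `(Q; Q)_j = ∏_{i=1}^{j} (1 - Qⁱ)`. -/
noncomputable def qPoch (Q : ℝ) (j : ℕ) : ℝ := ∏ i ∈ Finset.range j, (1 - Q ^ (i + 1))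

/-- The reciprocal of `(Q; Q)_{j-1}`, with the usual convention `1 / (Q; Q)_{-1} = 0` at `j = 0`.
The shift of the index by one makes `qInv_step` hold without exception. -/
noncomputable def qInv (Q : ℝ) : ℕ → ℝ
  | 0 => 0
  | j + 1 => (qPoch Q j)⁻¹

/-- The coefficient `Q^{n(n+1)/2} [2N+1 choose N-n]_Q`, where `Q = y²`, of `cos ((2n+1)φ)` in the
finite theta product `cos φ ∏_{j=1}^{N} (1 + 2 Q^j cos 2φ + Q^{2j})`. It is zero for `n > N`, because
then the truncated difference `N + 1 - n` is `0`. -/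
noncomputable def thetaCoef (y : ℝ) (N n : ℕ) : ℝ :=
  y ^ (n * (n + 1)) * qPoch (y ^ 2) (2 * N + 1) * qInv (y ^ 2) (N + 1 - n) * qInv (y ^ 2) (N + n + 2)

/-- The finite theta product, written as a trigonometric sum. -/
noncomputable def thetaSum (y : ℝ) (N : ℕ) (φ : ℝ) : ℝ :=
  ∑ n ∈ Finset.range (N + 1), thetaCoef y N n * cos ((2 * n + 1) * φ)

/-- Minus the derivative of `thetaSum` in `φ`. -/
noncomputable def thetaSum' (y : ℝ) (N : ℕ) (φ : ℝ) : ℝ :=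
  ∑ n ∈ Finset.range (N + 1), thetaCoef y N n * ((2 * n + 1) * sin ((2 * n + 1) * φ))

lemma qPoch_succ (Q : ℝ) (j : ℕ) : qPoch Q (j + 1) = qPoch Q j * (1 - Q ^ (j + 1)) := by
  simp [qPoch, Finset.prod_range_succ]

lemma qPoch_pos {Q : ℝ} (h0 : 0 ≤ Q) (h1 : Q < 1) (j : ℕ) : 0 < qPoch Q j :=
  Finset.prod_pos fun i _ => sub_pos.2 (pow_lt_one₀ h0 h1 (Nat.succ_ne_zero i))

lemma qInv_step {Q : ℝ} (h0 : 0 ≤ Q) (h1 : Q < 1) (j : ℕ) :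
    qInv Q j = (1 - Q ^ j) * qInv Q (j + 1) := by
  cases j with
  | zero => simp [qInv]
  | succ j =>
    have h := (qPoch_pos h0 h1 j).ne'
    have h' := (qPoch_pos h0 h1 (j + 1)).ne'
    simp only [qInv]
    rw [qPoch_succ] at h' ⊢
    have := right_ne_zero_of_mul h'
    field_simp

lemma thetaCoef_eq_zero {y : ℝ} {N n : ℕ} (h : N < n) : thetaCoef y N n = 0 := by
  have : N + 1 - n = 0 := by omega
  simp [thetaCoef, this, qInv]

/-- The Pascal-type recurrence of the coefficients; it encodes multiplication by
`1 + 2 Q^{N+1} cos 2φ + Q^{2(N+1)}`. -/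
lemma thetaCoef_succ {y : ℝ} (h0 : 0 ≤ y) (h1 : y < 1) {N n : ℕ} (hn : n ≤ N) :
    thetaCoef y (N + 1) (n + 1) = (1 + y ^ (4 * (N + 1))) * thetaCoef y N (n + 1)
      + y ^ (2 * (N + 1)) * (thetaCoef y N n + thetaCoef y N (n + 2)) := by
  have hQ0 : 0 ≤ y ^ 2 := by positivity
  have hQ1 : y ^ 2 < 1 := pow_lt_one₀ h0 h1 two_ne_zero
  obtain ⟨j, rfl⟩ := Nat.exists_eq_add_of_le hn
  have a1 := qInv_step hQ0 hQ1 (n + j + n + 3)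
  have a2 := qInv_step hQ0 hQ1 (n + j + n + 2)
  have p1 := qPoch_succ (y ^ 2) (2 * (n + j) + 1)
  have p2 := qPoch_succ (y ^ 2) (2 * (n + j) + 2)
  have c1 := qInv_step hQ0 hQ1 j
  simp only [thetaCoef]
  rw [show 2 * (n + j + 1) + 1 = 2 * (n + j) + 2 + 1 by ring,
    show n + j + 1 + 1 - (n + 1) = j + 1 by omega,
    show n + j + 1 + (n + 1) + 2 = n + j + n + 3 + 1 by ring,
    show n + j + (n + 1) + 2 = n + j + n + 3 by ring,
    show n + j + (n + 2) + 2 = n + j + n + 3 + 1 by ring,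
    show n + j + 1 - (n + 1) = j by omega,
    show n + j + 1 - n = j + 1 by omega, p2, p1, a2, a1]
  cases j with
  | zero =>
    rw [show n + 0 + 1 - (n + 2) = 0 by omega]
    simp only [qInv]
    ring
  | succ i =>
    have c2 := qInv_step hQ0 hQ1 i
    rw [show n + (i + 1) + 1 - (n + 2) = i by omega, c2, c1]
    ring

lemma thetaCoef_succ_zero {y : ℝ} (h0 : 0 ≤ y) (h1 : y < 1) (N : ℕ) :
    thetaCoef y (N + 1) 0 = (1 + y ^ (4 * (N + 1))) * thetaCoef y N 0
      + y ^ (2 * (N + 1)) * (thetaCoef y N 0 + thetaCoef y N 1) := by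
  have hQ0 : 0 ≤ y ^ 2 := by positivity
  have hQ1 : y ^ 2 < 1 := pow_lt_one₀ h0 h1 two_ne_zero
  have a1 := qInv_step hQ0 hQ1 (N + 2)
  have a2 := qInv_step hQ0 hQ1 (N + 1)
  have a3 := qInv_step hQ0 hQ1 N
  have p1 := qPoch_succ (y ^ 2) (2 * N + 1)
  have p2 := qPoch_succ (y ^ 2) (2 * N + 2)
  simp only [thetaCoef]
  rw [show 2 * (N + 1) + 1 = 2 * N + 2 + 1 by ring,
    show N + 1 + 1 - 0 = N + 1 + 1 by omega, show N + 1 + 0 + 2 = N + 2 + 1 by ring,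
    show N + 1 - 0 = N + 1 by omega, show N + 0 + 2 = N + 2 by ring,
    show N + 1 - 1 = N by omega, show N + 1 + 2 = N + 2 + 1 by ring, p2, p1, a3, a2, a1]
  ring

lemma two_cos_mul_sum (a : ℕ → ℝ) (φ : ℝ) (K : ℕ) :
    2 * cos (2 * φ) * ∑ n ∈ Finset.range (K + 1), a n * cos ((2 * n + 1) * φ)
      = (∑ n ∈ Finset.range (K + 1), a n * cos ((2 * (n + 1 : ℕ) + 1) * φ)) + a 0 * cos φ
        + ∑ n ∈ Finset.range K, a (n + 1) * cos ((2 * n + 1) * φ) := by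
  have key : ∀ n : ℕ, 2 * cos (2 * φ) * cos ((2 * (n + 1 : ℕ) + 1) * φ)
      = cos ((2 * (n + 2 : ℕ) + 1) * φ) + cos ((2 * n + 1) * φ) := by
    intro n
    rw [show (2 * ((n + 2 : ℕ) : ℝ) + 1) * φ = (2 * (n + 1 : ℕ) + 1) * φ + 2 * φ by
      push_cast; ring,
      show (2 * (n : ℝ) + 1) * φ = (2 * (n + 1 : ℕ) + 1) * φ - 2 * φ by push_cast; ring,
      cos_add, cos_sub]
    ring
  induction K with
  | zero =>
    have : cos ((2 * ((0 + 1 : ℕ) : ℝ) + 1) * φ) = cos (2 * φ) * cos φ - sin (2 * φ) * sin φ := by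
      rw [← cos_add]; congr 1; push_cast; ring
    simp only [Finset.sum_range_one, zero_add, Finset.range_zero, Finset.sum_empty] at this ⊢
    rw [this, Nat.cast_zero, mul_zero, zero_add, one_mul, sin_two_mul, cos_two_mul]
    linear_combination 2 * a 0 * cos φ * sin_sq_add_cos_sq φ
  | succ K ih =>
    rw [Finset.sum_range_succ, mul_add, ih, Finset.sum_range_succ _ (K + 1),
      Finset.sum_range_succ (fun n : ℕ => a (n + 1) * cos ((2 * n + 1) * φ)) K]
    linear_combination a (K + 1) * key K

/-- Inductive form of the finite Jacobi triple product identity. -/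
lemma thetaSum_succ {y : ℝ} (h0 : 0 ≤ y) (h1 : y < 1) (N : ℕ) (φ : ℝ) :
    thetaSum y (N + 1) φ =
      (1 + 2 * y ^ (2 * (N + 1)) * cos (2 * φ) + y ^ (4 * (N + 1))) * thetaSum y N φ := by
  have hz : thetaCoef y N (N + 1) = 0 := thetaCoef_eq_zero (Nat.lt_succ_self N)
  have hz' : thetaCoef y N (N + 2) = 0 := thetaCoef_eq_zero (by omega)
  have hs : thetaSum y N φ = ∑ n ∈ Finset.range (N + 1),
      thetaCoef y N (n + 1) * cos ((2 * (n + 1 : ℕ) + 1) * φ) + thetaCoef y N 0 * cos φ := by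
    have := Finset.sum_range_succ' (fun n : ℕ => thetaCoef y N n * cos ((2 * n + 1) * φ)) (N + 1)
    rw [Finset.sum_range_succ, hz] at this
    simpa [thetaSum] using this
  have h2 := two_cos_mul_sum (thetaCoef y N) φ (N + 1)
  rw [Finset.sum_range_succ _ (N + 1), hz, zero_mul, add_zero,
    Finset.sum_range_succ _ (N + 1), hz, zero_mul, add_zero] at h2
  have h3 : ∑ n ∈ Finset.range (N + 1), thetaCoef y N (n + 1) * cos ((2 * n + 1) * φ)
      = ∑ n ∈ Finset.range (N + 1),
        thetaCoef y N (n + 2) * cos ((2 * (n + 1 : ℕ) + 1) * φ) + thetaCoef y N 1 * cos φ := by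
    have := Finset.sum_range_succ'
      (fun n : ℕ => thetaCoef y N (n + 1) * cos ((2 * n + 1) * φ)) (N + 1)
    rw [Finset.sum_range_succ, hz'] at this
    simpa using this
  rw [h3] at h2
  have h4 : thetaSum y (N + 1) φ = ∑ n ∈ Finset.range (N + 1),
      ((1 + y ^ (4 * (N + 1))) * thetaCoef y N (n + 1)
      + y ^ (2 * (N + 1)) * (thetaCoef y N n + thetaCoef y N (n + 2)))
        * cos ((2 * (n + 1 : ℕ) + 1) * φ) + thetaCoef y (N + 1) 0 * cos φ := by
    rw [thetaSum, Finset.sum_range_succ']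
    congr 1
    · refine Finset.sum_congr rfl fun n hn => ?_
      rw [thetaCoef_succ h0 h1 (Nat.lt_succ_iff.1 (Finset.mem_range.1 hn))]
    · simp
  have h5 : (1 + 2 * y ^ (2 * (N + 1)) * cos (2 * φ) + y ^ (4 * (N + 1))) * thetaSum y N φ
      = (1 + y ^ (4 * (N + 1))) * thetaSum y N φ
        + y ^ (2 * (N + 1)) * (2 * cos (2 * φ) * thetaSum y N φ) := by ring
  rw [h4, h5]
  nth_rewrite 2 [thetaSum]
  rw [h2, hs, thetaCoef_succ_zero h0 h1]
  simp only [add_mul, mul_add, Finset.sum_add_distrib, Finset.mul_sum, mul_assoc]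
  ring

lemma hasDerivAt_thetaSum (y : ℝ) (N : ℕ) (φ : ℝ) :
    HasDerivAt (thetaSum y N) (-thetaSum' y N φ) φ := by
  unfold thetaSum thetaSum'
  rw [← Finset.sum_neg_distrib]
  refine HasDerivAt.fun_sum fun n _ => ?_
  have := ((((hasDerivAt_id φ).const_mul (2 * (n : ℝ) + 1)).cos).const_mul (thetaCoef y N n))
  refine this.congr_deriv ?_
  simp only [id]; ring

lemma thetaSum'_succ {y : ℝ} (h0 : 0 ≤ y) (h1 : y < 1) (N : ℕ) (φ : ℝ) :
    thetaSum' y (N + 1) φ =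
      (1 + 2 * y ^ (2 * (N + 1)) * cos (2 * φ) + y ^ (4 * (N + 1))) * thetaSum' y N φ
        + 4 * y ^ (2 * (N + 1)) * sin (2 * φ) * thetaSum y N φ := by
  have hc : HasDerivAt (fun φ => cos (2 * φ)) (-sin (2 * φ) * 2) φ := by
    simpa using ((hasDerivAt_id φ).const_mul 2).cos
  have hd := (((hc.const_mul (2 * y ^ (2 * (N + 1)))).const_add 1).add_const
    (y ^ (4 * (N + 1)))).mul (hasDerivAt_thetaSum y N φ)
  have he : HasDerivAt (thetaSum y (N + 1)) _ φ :=
    hd.congr_of_eventuallyEq (Eventually.of_forall fun t => thetaSum_succ h0 h1 N t)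
  linear_combination -(hasDerivAt_thetaSum y (N + 1) φ).unique he

/-- If `C = thetaSum y N`, multiplying `C` by the factor `F = 1 + 2 z cos 2φ + z²`, `z = Q^{N+1}`,
turns `cos φ C - sin φ C'` into `F (cos φ C - sin φ C') + 8 z sin² φ (cos φ C)`. The last term is
nonnegative because `cos φ C = cos² φ ∏ F` is, and `F ≥ (1 - z)²`. -/
lemma theta_finite_bound {y : ℝ} (h0 : 0 ≤ y) (h1 : y < 1) (φ : ℝ) (N : ℕ) :
    0 ≤ cos φ * thetaSum y N φ ∧
      qPoch (y ^ 2) N ^ 2 ≤ cos φ * thetaSum y N φ + sin φ * thetaSum' y N φ := by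
  induction N with
  | zero =>
    have : thetaCoef y 0 0 = 1 := by
      have := (qPoch_pos (sq_nonneg y) (pow_lt_one₀ h0 h1 two_ne_zero) 1).ne'
      simp [thetaCoef, qInv, qPoch] at this ⊢
      exact mul_inv_cancel₀ this
    simp only [thetaSum, thetaSum', zero_add, Finset.sum_range_one, this, Nat.cast_zero, mul_zero,
      one_mul]
    refine ⟨mul_self_nonneg _, ?_⟩
    simp only [qPoch, Finset.range_zero, Finset.prod_empty]
    nlinarith [sin_sq_add_cos_sq φ]
  | succ N ih =>
    obtain ⟨ih1, ih2⟩ := ih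
    rw [thetaSum_succ h0 h1, thetaSum'_succ h0 h1, qPoch_succ, sin_two_mul,
      show y ^ (4 * (N + 1)) = (y ^ (2 * (N + 1))) ^ 2 by rw [← pow_mul]; ring_nf,
      show (y ^ 2) ^ (N + 1) = y ^ (2 * (N + 1)) by rw [← pow_mul]]
    set z := y ^ (2 * (N + 1)) with hz
    have hz0 : 0 ≤ z := by positivity
    have hF : (1 - z) ^ 2 ≤ 1 + 2 * z * cos (2 * φ) + z ^ 2 := by
      nlinarith [mul_nonneg hz0 (by linarith [neg_one_le_cos (2 * φ)] : 0 ≤ 1 + cos (2 * φ))]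
    have hF0 := (sq_nonneg (1 - z)).trans hF
    set F := 1 + 2 * z * cos (2 * φ) + z ^ 2
    refine ⟨by nlinarith [mul_nonneg hF0 ih1], ?_⟩
    have e1 := mul_le_mul ih2 hF (sq_nonneg _) ((sq_nonneg _).trans ih2)
    have e2 : 0 ≤ 8 * z * sin φ ^ 2 * (cos φ * thetaSum y N φ) := by positivity
    nlinarith

/-! ### Passage to the limit -/

/-- The limit `(Q; Q)_∞` exists, is positive, and is a lower bound of the finite products. -/
lemma exists_qPoch_limit {Q : ℝ} (h0 : 0 ≤ Q) (h1 : Q < 1) :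
    ∃ c : ℝ, 0 < c ∧ (∀ j, c ≤ qPoch Q j) ∧ Tendsto (qPoch Q) atTop (𝓝 c) := by
  have hanti : Antitone (qPoch Q) := antitone_nat_of_succ_le fun j => by
    rw [qPoch_succ]
    have := qPoch_pos h0 h1 j
    have : 0 ≤ Q ^ (j + 1) := by positivity
    nlinarith
  have h1Q : 0 < 1 - Q := sub_pos.2 h1
  -- `1 - t ≥ exp (-t / (1 - t))`, and the exponents `Q^{i+1} / (1 - Q)` are summable.
  have hlow : ∀ j, exp (-(∑ i ∈ Finset.range j, Q ^ (i + 1) / (1 - Q))) ≤ qPoch Q j := by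
    intro j
    rw [← Finset.sum_neg_distrib, exp_sum]
    refine Finset.prod_le_prod (fun _ _ => (exp_pos _).le) fun i _ => ?_
    have ht0 : 0 ≤ Q ^ (i + 1) := by positivity
    have ht1 : Q ^ (i + 1) ≤ Q := pow_le_of_le_one h0 h1.le (Nat.succ_ne_zero i)
    set t := Q ^ (i + 1)
    have ht : 0 < 1 - t := by linarith
    have hexp : (1 - t)⁻¹ ≤ exp (t / (1 - Q)) := by
      have h2 : t / (1 - t) ≤ t / (1 - Q) := by gcongr
      have h3 : (1 - t)⁻¹ = t / (1 - t) + 1 := by field_simp; ring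
      rw [h3]
      linarith [add_one_le_exp (t / (1 - Q))]
    rw [exp_neg]
    exact inv_le_of_inv_le₀ ht hexp
  have hsum : ∀ j, ∑ i ∈ Finset.range j, Q ^ (i + 1) / (1 - Q) ≤ (1 - Q)⁻¹ / (1 - Q) := by
    intro j
    rw [← Finset.sum_div]
    gcongr
    calc ∑ i ∈ Finset.range j, Q ^ (i + 1) ≤ ∑ i ∈ Finset.range j, Q ^ i :=
          Finset.sum_le_sum fun i _ => pow_le_pow_of_le_one h0 h1.le (Nat.le_succ i)
      _ ≤ ∑' i, Q ^ i := (summable_geometric_of_lt_one h0 h1).sum_le_tsum _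
          fun i _ => by positivity
      _ = (1 - Q)⁻¹ := tsum_geometric_of_lt_one h0 h1
  have hb : ∀ j, exp (-((1 - Q)⁻¹ / (1 - Q))) ≤ qPoch Q j := fun j =>
    (exp_le_exp.2 (neg_le_neg (hsum j))).trans (hlow j)
  have hbdd : BddBelow (range (qPoch Q)) := ⟨_, by rintro _ ⟨j, rfl⟩; exact hb j⟩
  exact ⟨⨅ j, qPoch Q j, (exp_pos _).trans_le (le_ciInf hb), fun j => ciInf_le hbdd j,
    tendsto_atTop_ciInf hanti hbdd⟩

lemma summable_linear_geometric {R : ℝ} (h0 : 0 ≤ R) (h1 : R < 1) (a b : ℝ) :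
    Summable fun n : ℕ => (a * n + b) * R ^ n := by
  have hR : ‖R‖ < 1 := by rwa [norm_of_nonneg h0]
  have e1 : Summable fun n : ℕ => (n : ℝ) * R ^ n := by
    simpa using summable_pow_mul_geometric_of_norm_lt_one 1 hR
  refine ((e1.mul_left a).add ((summable_geometric_of_lt_one h0 h1).mul_left b)).congr fun n => ?_
  ring

/-- With `C(φ) = ∑ y^{n(n+1)} cos ((2n+1)φ)`, a theta function, this is `cos φ C - sin φ C' > 0`. -/
lemma theta_pos {y : ℝ} (h0 : 0 ≤ y) (h1 : y < 1) (φ : ℝ) :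
    0 < ∑' n : ℕ, y ^ (n * (n + 1)) *
      (cos φ * cos ((2 * n + 1) * φ) + sin φ * ((2 * n + 1) * sin ((2 * n + 1) * φ))) := by
  have hQ0 : 0 ≤ y ^ 2 := by positivity
  have hQ1 : y ^ 2 < 1 := pow_lt_one₀ h0 h1 two_ne_zero
  obtain ⟨c, hc, hcl, hct⟩ := exists_qPoch_limit hQ0 hQ1
  set e : ℕ → ℝ := fun n =>
    cos φ * cos ((2 * n + 1) * φ) + sin φ * ((2 * n + 1) * sin ((2 * n + 1) * φ)) with he
  have hebd : ∀ n, |e n| ≤ 2 * n + 2 := by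
    intro n
    have b1 : |cos φ * cos ((2 * n + 1) * φ)| ≤ 1 := by
      rw [abs_mul]
      exact mul_le_one₀ (abs_cos_le_one _) (abs_nonneg _) (abs_cos_le_one _)
    have b2 : |sin φ * ((2 * n + 1) * sin ((2 * n + 1) * φ))| ≤ 2 * n + 1 := by
      have hp : (0 : ℝ) ≤ 2 * n + 1 := by positivity
      rw [mul_left_comm, abs_mul, abs_of_nonneg hp, abs_mul]
      exact mul_le_of_le_one_right hp
        (mul_le_one₀ (abs_sin_le_one _) (abs_nonneg _) (abs_sin_le_one _))
    calc |e n| ≤ _ := abs_add_le _ _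
      _ ≤ 2 * n + 2 := by linarith
  have hinv : ∀ j, |qInv (y ^ 2) j| ≤ c⁻¹ := by
    intro j
    cases j with
    | zero => simpa [qInv] using hc.le
    | succ j =>
      simp only [qInv]
      rw [abs_of_pos (inv_pos.2 (qPoch_pos hQ0 hQ1 j))]
      exact inv_anti₀ hc (hcl j)
  have hP1 : ∀ j, |qPoch (y ^ 2) j| ≤ 1 := by
    intro j
    rw [abs_of_pos (qPoch_pos hQ0 hQ1 j)]
    refine Finset.prod_le_one (fun i _ => ?_) fun i _ => ?_
    · exact sub_nonneg.2 (pow_le_one₀ hQ0 hQ1.le)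
    · linarith [pow_nonneg hQ0 (i + 1)]
  have hinvt : Tendsto (qInv (y ^ 2)) atTop (𝓝 c⁻¹) :=
    (tendsto_add_atTop_iff_nat 1).1 (hct.inv₀ hc.ne')
  have hlim : Tendsto (fun N => ∑' n, thetaCoef y N n * e n) atTop
      (𝓝 (∑' n, y ^ (n * (n + 1)) * c * c⁻¹ * c⁻¹ * e n)) := by
    refine tendsto_tsum_of_dominated_convergence
      (bound := fun n : ℕ => ((c⁻¹ * c⁻¹ * 2) * n + c⁻¹ * c⁻¹ * 2) * y ^ n)
      (summable_linear_geometric h0 h1 _ _) (fun n => ?_) (Eventually.of_forall fun N n => ?_)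
    · have t1 : Tendsto (fun N : ℕ => 2 * N + 1) atTop atTop :=
        tendsto_atTop_mono (fun N => by simp only [id]; omega) tendsto_id
      have t2 : Tendsto (fun N : ℕ => N + 1 - n) atTop atTop :=
        tendsto_atTop_mono (fun N => by omega) (tendsto_sub_atTop_nat n)
      have t3 : Tendsto (fun N : ℕ => N + n + 2) atTop atTop :=
        tendsto_atTop_mono (fun N => by simp only [id]; omega) tendsto_id
      exact ((((hct.comp t1).const_mul _).mul (hinvt.comp t2)).mul (hinvt.comp t3)).mul_const _
    · have hyn : y ^ (n * (n + 1)) ≤ y ^ n := pow_le_pow_of_le_one h0 h1.le (by nlinarith)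
      rw [norm_eq_abs, thetaCoef, abs_mul, abs_mul, abs_mul, abs_mul,
        abs_of_nonneg (pow_nonneg h0 (n * (n + 1)))]
      calc _ ≤ y ^ n * 1 * c⁻¹ * c⁻¹ * (2 * n + 2) := by
            gcongr
            exacts [hP1 _, hinv _, hinv _, hebd n]
        _ = _ := by ring
  have hge : ∀ N, c ^ 2 ≤ ∑' n, thetaCoef y N n * e n := by
    intro N
    rw [tsum_eq_sum (s := Finset.range (N + 1)) fun n hn => by
      rw [thetaCoef_eq_zero (by simpa using hn), zero_mul]]
    have := (theta_finite_bound h0 h1 φ N).2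
    calc c ^ 2 ≤ qPoch (y ^ 2) N ^ 2 := by gcongr; exact hcl N
      _ ≤ _ := this
      _ = _ := by
        simp only [thetaSum, thetaSum', Finset.mul_sum, ← Finset.sum_add_distrib]
        exact Finset.sum_congr rfl fun n _ => by simp only [he]; ring
  have hfin := ge_of_tendsto' hlim hge
  have hrw : ∑' n, y ^ (n * (n + 1)) * c * c⁻¹ * c⁻¹ * e n
      = c⁻¹ * ∑' n, y ^ (n * (n + 1)) * e n := by
    rw [← tsum_mul_left]
    exact tsum_congr fun n => by field_simp
  rw [hrw] at hfin
  exact pos_of_mul_pos_right ((by positivity : (0 : ℝ) < c ^ 2).trans_le hfin) (inv_pos.2 hc).le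

/-! ### Termwise differentiation -/

/-- The `n`-th term of the series of `w` without the factor `8 / π`, where `m = 4n + 2` and
`m² / 2 = 8n(n+1) + 2`. -/
noncomputable def wTerm (n : ℕ) (p q : ℝ) : ℝ :=
  (p ^ 2 + q ^ 2) ^ (8 * (n * (n + 1)) + 2) * sin ((4 * n + 2) * arctan (q / p))
    / (((4 * n + 2) ^ 2 - 1) * (4 * n + 2))

/-- The partial derivative of `wTerm n` in `p`. -/
noncomputable def wpTerm (n : ℕ) (p q : ℝ) : ℝ :=
  (p ^ 2 + q ^ 2) ^ (8 * (n * (n + 1)) + 1) *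
    ((4 * n + 2) * p * sin ((4 * n + 2) * arctan (q / p)) - q * cos ((4 * n + 2) * arctan (q / p)))
    / ((4 * n + 2) ^ 2 - 1)

/-- The mixed partial derivative of `wTerm n`; the factor `m² - 1` has cancelled. -/
noncomputable def wpqTerm (n : ℕ) (p q : ℝ) : ℝ :=
  (p ^ 2 + q ^ 2) ^ (8 * (n * (n + 1))) *
    ((4 * n + 2) * (p * q) * sin ((4 * n + 2) * arctan (q / p))
      + (p ^ 2 - q ^ 2) * cos ((4 * n + 2) * arctan (q / p)))

lemma w_eq_tsum (p q : ℝ) : w p q = 8 / π * ∑' n, wTerm n p q := by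
  unfold w W wTerm
  congr 1
  refine tsum_congr fun n => ?_
  have h : mIdx n ^ 2 = 2 * (8 * (n * (n + 1)) + 2) := by unfold mIdx; ring
  rw [h, pow_mul, sq_sqrt (by positivity)]
  simp [mIdx]

lemma w_symm {p q : ℝ} (hp : 0 < p) (hq : 0 < q) : w p q = w q p := by
  rw [w_eq_tsum, w_eq_tsum]
  congr 1
  refine tsum_congr fun n => ?_
  have h1 : arctan (p / q) = π / 2 - arctan (q / p) := by
    rw [← arctan_inv_of_pos (by positivity), inv_div]
  -- `m (π / 2) = (2n + 1) π`.
  have h2 : sin ((4 * n + 2) * arctan (p / q)) = sin ((4 * n + 2) * arctan (q / p)) := by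
    rw [h1, show (4 * (n : ℝ) + 2) * (π / 2 - arctan (q / p))
      = π - (4 * n + 2) * arctan (q / p) + n * (2 * π) by ring, sin_add_nat_mul_two_pi, sin_pi_sub]
  rw [wTerm, wTerm, h2, add_comm (p ^ 2)]

lemma m_sq_sub_one_ge (n : ℕ) : (1 : ℝ) ≤ (4 * n + 2) ^ 2 - 1 := by
  have : (0 : ℝ) ≤ n := n.cast_nonneg
  nlinarith

lemma hasDerivAt_arctan_div_left {p q : ℝ} (hp : p ≠ 0) :
    HasDerivAt (fun s => arctan (q / s)) (-q / (p ^ 2 + q ^ 2)) p := by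
  have := ((hasDerivAt_inv hp).const_mul q).arctan
  refine (this.congr_deriv ?_).congr_of_eventuallyEq
    (Eventually.of_forall fun s => by simp only [div_eq_mul_inv])
  have : p ^ 2 + q ^ 2 ≠ 0 := by positivity
  field_simp

lemma hasDerivAt_arctan_div_right {p q : ℝ} (hp : p ≠ 0) :
    HasDerivAt (fun t => arctan (t / p)) (p / (p ^ 2 + q ^ 2)) q := by
  have := ((hasDerivAt_id q).div_const p).arctan
  refine this.congr_deriv ?_
  have : p ^ 2 + q ^ 2 ≠ 0 := by positivity
  simp only [id]
  field_simp

lemma hasDerivAt_wTerm (n : ℕ) {p q : ℝ} (hp : p ≠ 0) :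
    HasDerivAt (fun s => wTerm n s q) (wpTerm n p q) p := by
  have hm := m_sq_sub_one_ge n
  have hρ : p ^ 2 + q ^ 2 ≠ 0 := by positivity
  have h1 : HasDerivAt (fun s : ℝ => s ^ 2 + q ^ 2) (2 * p) p := by
    simpa using (hasDerivAt_pow 2 p).add_const (q ^ 2)
  have h2 := ((hasDerivAt_arctan_div_left (q := q) hp).const_mul (4 * (n : ℝ) + 2)).sin
  have h := ((h1.pow (8 * (n * (n + 1)) + 2)).mul h2).div_const
    (((4 * (n : ℝ) + 2) ^ 2 - 1) * (4 * n + 2))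
  refine h.congr_deriv ?_
  unfold wpTerm
  have hm0 : (4 * (n : ℝ) + 2) ^ 2 - 1 ≠ 0 := by linarith
  rw [show 8 * (n * (n + 1)) + 2 - 1 = 8 * (n * (n + 1)) + 1 by omega]
  generalize hM : (4 * (n : ℝ) + 2) ^ 2 - 1 = M at *
  have hm1 : 4 * (n : ℝ) + 2 ≠ 0 := by positivity
  push_cast
  simp only [Pi.pow_apply]
  rw [pow_succ _ (8 * (n * (n + 1)) + 1)]
  field_simp
  ring

lemma hasDerivAt_wpTerm (n : ℕ) {p q : ℝ} (hp : p ≠ 0) :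
    HasDerivAt (fun t => wpTerm n p t) (wpqTerm n p q) q := by
  have hm := m_sq_sub_one_ge n
  have hρ : p ^ 2 + q ^ 2 ≠ 0 := by positivity
  have h1 : HasDerivAt (fun t : ℝ => p ^ 2 + t ^ 2) (2 * q) q := by
    simpa using (hasDerivAt_pow 2 q).const_add (p ^ 2)
  have h2 := (hasDerivAt_arctan_div_right (q := q) hp).const_mul (4 * (n : ℝ) + 2)
  have h := ((h1.pow (8 * (n * (n + 1)) + 1)).mul
    ((h2.sin.const_mul ((4 * (n : ℝ) + 2) * p)).sub ((hasDerivAt_id q).mul h2.cos))).div_const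
    ((4 * (n : ℝ) + 2) ^ 2 - 1)
  refine h.congr_deriv ?_
  unfold wpqTerm
  have hm0 : (4 * (n : ℝ) + 2) ^ 2 - 1 ≠ 0 := by linarith
  simp only [id, Pi.mul_apply, Pi.sub_apply, Pi.pow_apply, Nat.add_sub_cancel]
  rw [div_eq_iff hm0]
  push_cast
  rw [pow_succ _ (8 * (n * (n + 1)))]
  field_simp
  ring

lemma abs_comb_le {A B x y : ℝ} {a b : ℝ} (ha : |a| ≤ A) (hb : |b| ≤ B) (hx : |x| ≤ 1)
    (hy : |y| ≤ 1) : |a * x + b * y| ≤ A + B := by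
  calc |a * x + b * y| ≤ |a| * |x| + |b| * |y| := by
        rw [← abs_mul, ← abs_mul]; exact abs_add_le _ _
    _ ≤ A * 1 + B * 1 := by
        have := abs_nonneg a
        have := abs_nonneg b
        gcongr <;> linarith
    _ = A + B := by ring

/-- A common summable majorant of the three series on `p² + q² ≤ R < 1`. -/
lemma term_bounds (n : ℕ) {p q R : ℝ} (hp : 0 < p) (hq : 0 < q) (hR : p ^ 2 + q ^ 2 ≤ R)
    (hR1 : R < 1) :
    ‖wTerm n p q‖ ≤ (4 * n + 3) * R ^ n ∧ ‖wpTerm n p q‖ ≤ (4 * n + 3) * R ^ n ∧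
      ‖wpqTerm n p q‖ ≤ (4 * n + 3) * R ^ n := by
  have hm := m_sq_sub_one_ge n
  have hn0 : (0 : ℝ) ≤ n := n.cast_nonneg
  have hρ0 : 0 ≤ p ^ 2 + q ^ 2 := by positivity
  have hp1 : p ≤ 1 := by nlinarith
  have hq1 : q ≤ 1 := by nlinarith
  have hpow : ∀ k : ℕ, n ≤ k → |(p ^ 2 + q ^ 2) ^ k| ≤ R ^ n := by
    intro k hk
    rw [abs_of_nonneg (by positivity)]
    exact (pow_le_pow_of_le_one hρ0 (by linarith) hk).trans (pow_le_pow_left₀ hρ0 hR n)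
  have hk : n ≤ 8 * (n * (n + 1)) := by nlinarith
  have hRn : 0 ≤ R ^ n := pow_nonneg (hρ0.trans hR) n
  have hs := abs_sin_le_one ((4 * n + 2) * arctan (q / p))
  have hc := abs_cos_le_one ((4 * n + 2) * arctan (q / p))
  have hdiv : ∀ x d B : ℝ, 1 ≤ d → |x| ≤ B → |x / d| ≤ B := by
    intro x d B hd hx
    rw [abs_div, abs_of_pos (by linarith : 0 < d)]
    exact (div_le_self (abs_nonneg x) hd).trans hx
  refine ⟨?_, ?_, ?_⟩
  · refine hdiv _ _ _ (by nlinarith) ?_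
    rw [abs_mul]
    nlinarith [hpow _ (by omega : n ≤ 8 * (n * (n + 1)) + 2),
      mul_le_mul (hpow _ (by omega : n ≤ 8 * (n * (n + 1)) + 2)) hs (abs_nonneg _) hRn,
      mul_nonneg hn0 hRn]
  · refine hdiv _ _ _ hm ?_
    rw [abs_mul, mul_comm (4 * (n : ℝ) + 3)]
    refine mul_le_mul (hpow _ (by omega)) ?_ (abs_nonneg _) hRn
    have := abs_comb_le (a := (4 * n + 2) * p) (b := -q) (A := 4 * n + 2) (B := 1)
      (by rw [abs_of_nonneg (by positivity)]; nlinarith) (by rw [abs_neg, abs_of_pos hq]; exact hq1)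
      hs hc
    rw [neg_mul, ← sub_eq_add_neg] at this
    linarith
  · rw [wpqTerm, norm_eq_abs, abs_mul, mul_comm (4 * (n : ℝ) + 3)]
    refine mul_le_mul (hpow _ hk) ?_ (abs_nonneg _) hRn
    have := abs_comb_le (a := (4 * n + 2) * (p * q)) (b := p ^ 2 - q ^ 2) (A := 4 * n + 2) (B := 1)
      (by
        rw [abs_of_nonneg (by positivity)]
        have : p * q ≤ 1 := by nlinarith
        nlinarith) (by rw [abs_le]; constructor <;> nlinarith) hs hc
    linarith

lemma exists_radius {p q : ℝ} (h : p ^ 2 + q ^ 2 < 1) :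
    ∃ b, p < b ∧ b ^ 2 + q ^ 2 < 1 := by
  refine ⟨√((p ^ 2 + (1 - q ^ 2)) / 2), ?_, ?_⟩
  · exact lt_sqrt_of_sq_lt (by linarith)
  · rw [sq_sqrt (by nlinarith)]; linarith

lemma hasDerivAt_w {p q : ℝ} (hp : 0 < p) (hq : 0 < q) (h : p ^ 2 + q ^ 2 < 1) :
    HasDerivAt (fun s => w s q) (8 / π * ∑' n, wpTerm n p q) p := by
  obtain ⟨b, hpb, hb⟩ := exists_radius h
  have hmem : ∀ s ∈ Ioo 0 b, s ^ 2 + q ^ 2 ≤ b ^ 2 + q ^ 2 := fun s hs => by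
    have := hs.1; have := hs.2; gcongr
  have hu := summable_linear_geometric (by positivity) hb 4 3
  have := hasDerivAt_tsum_of_isPreconnected (g := fun n s => wTerm n s q)
    (g' := fun n s => wpTerm n s q) hu isOpen_Ioo isPreconnected_Ioo
    (fun n s hs => hasDerivAt_wTerm n hs.1.ne')
    (fun n s hs => (term_bounds n hs.1 hq (hmem s hs) hb).2.1) (y₀ := p) ⟨hp, hpb⟩
    (Summable.of_norm_bounded hu fun n => (term_bounds n hp hq (hmem p ⟨hp, hpb⟩) hb).1) ⟨hp, hpb⟩
  refine (this.const_mul (8 / π)).congr_of_eventuallyEq (Eventually.of_forall fun s => ?_)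
  exact w_eq_tsum s q

lemma hasDerivAt_wp {p q : ℝ} (hp : 0 < p) (hq : 0 < q) (h : p ^ 2 + q ^ 2 < 1) :
    HasDerivAt (fun t => wp p t) (8 / π * ∑' n, wpqTerm n p q) q := by
  obtain ⟨b, hqb, hb⟩ := exists_radius (p := q) (q := p) (by linarith)
  rw [add_comm] at hb
  have hmem : ∀ t ∈ Ioo 0 b, p ^ 2 + t ^ 2 ≤ p ^ 2 + b ^ 2 := fun t ht => by
    have := ht.1; have := ht.2; gcongr
  have hu := summable_linear_geometric (by positivity) hb 4 3
  have := hasDerivAt_tsum_of_isPreconnected (g := fun n t => wpTerm n p t)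
    (g' := fun n t => wpqTerm n p t) hu isOpen_Ioo isPreconnected_Ioo
    (fun n t ht => hasDerivAt_wpTerm n hp.ne')
    (fun n t ht => (term_bounds n hp ht.1 (hmem t ht) hb).2.2) (y₀ := q) ⟨hq, hqb⟩
    (Summable.of_norm_bounded hu fun n => (term_bounds n hp hq (hmem q ⟨hq, hqb⟩) hb).2.1) ⟨hq, hqb⟩
  refine (this.const_mul (8 / π)).congr_of_eventuallyEq ?_
  filter_upwards [Ioo_mem_nhds hq hqb] with t ht
  exact (hasDerivAt_w hp ht.1 ((hmem t ht).trans_lt hb)).deriv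

/-! ### Positivity of the mixed derivative -/

lemma tsum_wpqTerm_pos {p q : ℝ} (hp : 0 < p) (h : p ^ 2 + q ^ 2 < 1) :
    0 < ∑' n, wpqTerm n p q := by
  have hρ : 0 < p ^ 2 + q ^ 2 := by positivity
  set φ := 2 * arctan (q / p) with hφ
  have hc2 : cos (arctan (q / p)) ^ 2 = p ^ 2 / (p ^ 2 + q ^ 2) := by
    rw [cos_sq_arctan]; field_simp
  have hcos : (p ^ 2 + q ^ 2) * cos φ = p ^ 2 - q ^ 2 := by
    rw [hφ, cos_two_mul, hc2]; field_simp; ring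
  have hsin : (p ^ 2 + q ^ 2) * sin φ = 2 * (p * q) := by
    have ht : sin (arctan (q / p)) = q / p * cos (arctan (q / p)) := by
      rw [← tan_mul_cos (cos_arctan_pos _).ne', tan_arctan]
    rw [hφ, sin_two_mul, ht, show 2 * (q / p * cos (arctan (q / p))) * cos (arctan (q / p))
      = 2 * (q / p) * cos (arctan (q / p)) ^ 2 by ring, hc2]
    field_simp
  have key := theta_pos (y := (p ^ 2 + q ^ 2) ^ 8) (by positivity)
    (pow_lt_one₀ hρ.le h (by norm_num)) φ
  have hterm : ∀ n, wpqTerm n p q = (p ^ 2 + q ^ 2) * (((p ^ 2 + q ^ 2) ^ 8) ^ (n * (n + 1)) *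
      (cos φ * cos ((2 * n + 1) * φ) + sin φ * ((2 * n + 1) * sin ((2 * n + 1) * φ)))) := by
    intro n
    have ha : (4 * (n : ℝ) + 2) * arctan (q / p) = (2 * n + 1) * φ := by rw [hφ]; ring
    rw [wpqTerm, ha, ← hcos, ← pow_mul]
    linear_combination -(p ^ 2 + q ^ 2) ^ (8 * (n * (n + 1))) * (2 * n + 1) *
      sin ((2 * n + 1) * φ) * hsin
  rw [tsum_congr hterm, tsum_mul_left]
  exact mul_pos hρ key

lemma wpq_pos {p q : ℝ} (hp : 0 < p) (hq : 0 < q) (h : p ^ 2 + q ^ 2 < 1) : 0 < wpq p q := by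
  rw [wpq, (hasDerivAt_wp hp hq h).deriv]
  exact mul_pos (by positivity) (tsum_wpqTerm_pos hp h)

/-- The symmetry of `w` in `p` and `q` turns `w_q` into `w_p`. -/
lemma wq_eq_wp {p q : ℝ} (hp : 0 < p) (hq : 0 < q) : wq p q = wp q p := by
  refine EventuallyEq.deriv_eq ?_
  filter_upwards [Ioi_mem_nhds hq] with t ht
  exact w_symm hp ht

/-- `w_{pq} > 0` on `B₁`; hence for each fixed `q₀ ∈ (0,1)` the function
`p ↦ w_q(p,q₀)` is strictly increasing on `(0, √(1−q₀²))`. -/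
theorem stmt10 :
    (∀ p ∈ B1, 0 < wpq p.1 p.2) ∧
    (∀ q₀ ∈ Ioo (0 : ℝ) 1,
      StrictMonoOn (fun p => wq p q₀) (Ioo (0 : ℝ) (Real.sqrt (1 - q₀ ^ 2)))) := by
  refine ⟨fun x hx => wpq_pos hx.1 hx.2.1 hx.2.2, fun q₀ hq₀ => ?_⟩
  have hmem : ∀ p ∈ Ioo (0 : ℝ) (√(1 - q₀ ^ 2)), q₀ ^ 2 + p ^ 2 < 1 := fun p hp => by
    have := (lt_sqrt hp.1.le).1 hp.2
    linarith
  have hmono : StrictMonoOn (fun p => wp q₀ p) (Ioo (0 : ℝ) (√(1 - q₀ ^ 2))) := by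
    refine strictMonoOn_of_deriv_pos (convex_Ioo _ _)
      (fun p hp => (hasDerivAt_wp hq₀.1 hp.1 (hmem p hp)).continuousAt.continuousWithinAt)
      fun p hp => ?_
    rw [interior_Ioo] at hp
    exact wpq_pos hq₀.1 hp.1 (hmem p hp)
  exact hmono.congr fun p hp => (wq_eq_wp hp.1 hq₀.1).symm
end
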